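/- arXiv:2506.22421 — 4 statements merged into one kernel-verified Lean document; each statement's English description precedes it below -/
import Mathlib

section
/- Let μ, ν be Borel probability measures on ℝ^{dT} and let w : ℝ^{dT} → [0, ∞) be measurable with ∫ w dμ + ∫ w dν < ∞. Let η be the finite Borel measure on ℝ^{dT} obtained by composing, time step by time step, the lattice infima of the conditional kernels of μ and ν: η(dx) = (μ_1 ⊓ ν_1)(dx_1)(μ_{x_{1:1}} ⊓ ν_{x_{1:1}})(dx_2) ⋯ (μ_{x_{1:T−1}} ⊓ ν_{x_{1:T−1}})(dx_T), where for each t and each x_{1:t} the measure μ_{x_{1:t}} ⊓ ν_{x_{1:t}} is the greatest lower bound of the two conditional kernels in the lattice of finite Borel measures on ℝ^d, and these lattice infima form Borel-measurable sub-probability kernels. Then the supremum over bicausal couplings π of ∫ 2 w(x) 1_{x = y} dπ(x, y) equals 2 ∫ w dη, and consequently ATV_w(μ, ν) = ∫ w dμ + ∫ w dν − 2 ∫ w dη. -/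
open MeasureTheory ProbabilityTheory
open scoped ENNReal

noncomputable section

/-- The path space `ℝ^{dT}`: `T` time steps with state space `ℝ^d`. -/
abbrev Traj (d T : ℕ) : Type := Fin T → Fin d → ℝ

/-- Restriction of a path to its first `t` coordinates. -/
def restr (d : ℕ) {t T : ℕ} (h : t ≤ T) (x : Traj d T) : Traj d t :=
  fun i => x (Fin.castLE h i)

lemma measurable_restr (d : ℕ) {t T : ℕ} (h : t ≤ T) : Measurable (restr d h) :=
  measurable_pi_lambda _ (fun i => measurable_pi_apply _)

/-- σ-algebra generated by the first `t` coordinates of the first component. -/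
def sigmaX (d T : ℕ) {t : ℕ} (h : t ≤ T) : MeasurableSpace (Traj d T × Traj d T) :=
  MeasurableSpace.comap (fun ω => restr d h ω.1) inferInstance

/-- σ-algebra generated by the first `t` coordinates of the second component. -/
def sigmaY (d T : ℕ) {t : ℕ} (h : t ≤ T) : MeasurableSpace (Traj d T × Traj d T) :=
  MeasurableSpace.comap (fun ω => restr d h ω.2) inferInstance

lemma sigmaX_le (d T : ℕ) {t : ℕ} (h : t ≤ T) :
    sigmaX d T h ≤ (inferInstance : MeasurableSpace (Traj d T × Traj d T)) :=
  ((measurable_restr d h).comp measurable_fst).comap_le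

lemma sigmaY_le (d T : ℕ) {t : ℕ} (h : t ≤ T) :
    sigmaY d T h ≤ (inferInstance : MeasurableSpace (Traj d T × Traj d T)) :=
  ((measurable_restr d h).comp measurable_snd).comap_le

/-- A coupling `π` of two laws on the path space is *bicausal* if for each `t < T`,
`σ(Y_1,…,Y_t)` is conditionally independent of `σ(X_1,…,X_T)` given `σ(X_1,…,X_t)`, and
symmetrically. -/
def IsBicausal (d T : ℕ) (π : Measure (Traj d T × Traj d T)) [IsFiniteMeasure π] : Prop :=
  ∀ t, 1 ≤ t → ∀ h : t + 1 ≤ T,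
    CondIndep (sigmaX d T (Nat.le_of_succ_le h)) (sigmaY d T (Nat.le_of_succ_le h))
      (sigmaX d T (le_refl T)) (sigmaX_le d T (Nat.le_of_succ_le h)) π ∧
    CondIndep (sigmaY d T (Nat.le_of_succ_le h)) (sigmaX d T (Nat.le_of_succ_le h))
      (sigmaY d T (le_refl T)) (sigmaY_le d T (Nat.le_of_succ_le h)) π

/-- The set of couplings of `μ` and `ν`. -/
def Cpl {α : Type*} [MeasurableSpace α] (μ ν : Measure α) : Set (Measure (α × α)) :=
  {π | IsProbabilityMeasure π ∧ π.map Prod.fst = μ ∧ π.map Prod.snd = ν}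

/-- The set of bicausal couplings of `μ` and `ν`. -/
def BCpl {d T : ℕ} (μ ν : Measure (Traj d T)) : Set (Measure (Traj d T × Traj d T)) :=
  {π | π ∈ Cpl μ ν ∧ ∃ _ : IsFiniteMeasure π, IsBicausal d T π}

/-- Weighted total variation distance. -/
def TVw {d T : ℕ} (w : Traj d T → ℝ) (μ ν : Measure (Traj d T)) : ℝ≥0∞ :=
  ⨅ π ∈ Cpl μ ν, ∫⁻ q in {q : Traj d T × Traj d T | q.1 ≠ q.2},
    (ENNReal.ofReal (w q.1) + ENNReal.ofReal (w q.2)) ∂π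

/-- Weighted adapted total variation distance. -/
def ATVw {d T : ℕ} (w : Traj d T → ℝ) (μ ν : Measure (Traj d T)) : ℝ≥0∞ :=
  ⨅ π ∈ BCpl μ ν, ∫⁻ q in {q : Traj d T × Traj d T | q.1 ≠ q.2},
    (ENNReal.ofReal (w q.1) + ENNReal.ofReal (w q.2)) ∂π

/-- `p`-th power of the adapted Wasserstein distance (cost `|x-y|_p^p`). -/
def AWpow (p : ℝ) {d T : ℕ} (μ ν : Measure (Traj d T)) : ℝ≥0∞ :=
  ⨅ π ∈ BCpl μ ν, ∫⁻ q, ENNReal.ofReal (∑ i, ∑ j, |q.1 i j - q.2 i j| ^ p) ∂π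

/-- The weight `w_p(x) = 1 + |x|_p^p`. -/
def wp (p : ℝ) {d T : ℕ} (x : Traj d T) : ℝ := 1 + ∑ i, ∑ j, |x i j| ^ p


/-- Iterated composition of one-step kernels, producing a measure on the path space:
`η(dx) = κ₀(dx₁) κ₁(x₁, dx₂) ⋯ κ_{T-1}(x_{1:T-1}, dx_T)`. -/
def iterComp (d : ℕ) (κ : ∀ t : ℕ, Traj d t → Measure (Fin d → ℝ)) :
    ∀ T : ℕ, Measure (Traj d T)
  | 0 => Measure.dirac (fun i => i.elim0)
  | (t + 1) => (iterComp d κ t).bind (fun x => (κ t x).map (Fin.snoc x))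

/-!
Fix a bicausal coupling of `(X, Y)` and consider the law of `X_{1:t}` on the event
`X_{1:t} = Y_{1:t}`. By bicausality, given both paths up to time `t`, the next state `X_{t+1}` is
drawn from the conditional kernel of `μ` and `Y_{t+1}` from that of `ν`; so passing to time `t + 1`
multiplies this law by at most each of the two kernels, hence by at most their infimum. By
induction the diagonal part of a bicausal coupling is at most `η`.

Conversely, couple the two conditional kernels at each pair of pasts so that the next states agree
at least on the infimum of the kernels, with the two remainders coupled independently. The Markov
chain of pairs of paths built from these couplings is bicausal, because each of its coordinates is
a Markov chain on its own, and its diagonal part is at least `η`. Thus `η` is the greatest diagonal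
part of a bicausal coupling. The weighted cost off the diagonal is the constant
`∫ w dμ + ∫ w dν` minus twice the integral of `w` over the diagonal part.
-/

section InfKernel

variable {α β : Type*} {mα : MeasurableSpace α} {mβ : MeasurableSpace β}

lemma withDensity_inf (ρ : Measure α) {f g : α → ℝ≥0∞} (hf : Measurable f) (hg : Measurable g) :
    ρ.withDensity (f ⊓ g) = ρ.withDensity f ⊓ ρ.withDensity g := by
  refine le_antisymm (le_inf (withDensity_mono <| .of_forall fun _ => inf_le_left)
    (withDensity_mono <| .of_forall fun _ => inf_le_right)) (Measure.le_iff.2 fun s hs => ?_)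
  have hE : MeasurableSet {x | f x ≤ g x} := measurableSet_le hf hg
  set σ := ρ.withDensity f ⊓ ρ.withDensity g
  calc σ s = σ (s ∩ {x | f x ≤ g x}) + σ (s \ {x | f x ≤ g x}) :=
        (measure_inter_add_sdiff s hE).symm
    _ ≤ ρ.withDensity f (s ∩ {x | f x ≤ g x}) + ρ.withDensity g (s \ {x | f x ≤ g x}) :=
        add_le_add (Measure.le_iff'.1 inf_le_left _) (Measure.le_iff'.1 inf_le_right _)
    _ = ρ.withDensity (f ⊓ g) (s ∩ {x | f x ≤ g x}) +
          ρ.withDensity (f ⊓ g) (s \ {x | f x ≤ g x}) := by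
        simp only [withDensity_apply _ (hs.inter hE), withDensity_apply _ (hs.diff hE)]
        congr 1
        · exact setLIntegral_congr_fun (hs.inter hE) fun x hx => (inf_eq_left.2 hx.2).symm
        · exact setLIntegral_congr_fun (hs.diff hE) fun x hx =>
            (inf_eq_right.2 (not_le.1 hx.2).le).symm
    _ = ρ.withDensity (f ⊓ g) s := measure_inter_add_sdiff s hE

variable [MeasurableSpace.CountableOrCountablyGenerated α β]

lemma withDensity_rnDeriv_of_le {κ η : Kernel α β} [IsFiniteKernel κ] [IsFiniteKernel η]
    (h : κ ≤ η) : η.withDensity (κ.rnDeriv η) = κ :=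
  Kernel.ext fun x => Kernel.withDensity_rnDeriv_eq (Measure.absolutelyContinuous_of_le (h x))

variable (κ η : Kernel α β) [IsFiniteKernel κ] [IsFiniteKernel η]

lemma withDensity_rnDeriv_add_left : (κ + η).withDensity (κ.rnDeriv (κ + η)) = κ :=
  withDensity_rnDeriv_of_le fun _ => Measure.le_add_right le_rfl

lemma withDensity_rnDeriv_add_right : (κ + η).withDensity (η.rnDeriv (κ + η)) = η :=
  withDensity_rnDeriv_of_le fun _ => Measure.le_add_left le_rfl

lemma withDensity_rnDeriv_inf_rnDeriv_apply (x : α) :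
    (κ + η).withDensity (fun x => κ.rnDeriv (κ + η) x ⊓ η.rnDeriv (κ + η) x) x = κ x ⊓ η x := by
  have hκ := κ.measurable_rnDeriv (κ + η)
  have hη := η.measurable_rnDeriv (κ + η)
  rw [Kernel.withDensity_apply _ (hκ.inf hη),
    withDensity_inf _ hκ.of_uncurry_left hη.of_uncurry_left, ← Kernel.withDensity_apply _ hκ,
    ← Kernel.withDensity_apply _ hη, withDensity_rnDeriv_add_left, withDensity_rnDeriv_add_right]

/-- The pointwise lattice infimum of two finite kernels. Its density with respect to `κ + η` is
the infimum of the densities of `κ` and `η`; this is what makes it measurable. -/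
def infKernel : Kernel α β where
  toFun x := κ x ⊓ η x
  measurable' := by
    simp_rw [← withDensity_rnDeriv_inf_rnDeriv_apply κ η]
    exact Kernel.measurable _

lemma infKernel_le_left : infKernel κ η ≤ κ := fun _ => inf_le_left

lemma infKernel_le_right : infKernel κ η ≤ η := fun _ => inf_le_right

instance : IsFiniteKernel (infKernel κ η) := isFiniteKernel_of_le (infKernel_le_left κ η)

lemma compProd_infKernel (ρ : Measure α) [SFinite ρ] :
    ρ ⊗ₘ infKernel κ η = (ρ ⊗ₘ κ) ⊓ (ρ ⊗ₘ η) := by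
  have hκ := κ.measurable_rnDeriv (κ + η)
  have hη := η.measurable_rnDeriv (κ + η)
  have hinf : (κ + η).withDensity (fun x => κ.rnDeriv (κ + η) x ⊓ η.rnDeriv (κ + η) x) =
      infKernel κ η := Kernel.ext (withDensity_rnDeriv_inf_rnDeriv_apply κ η)
  have : IsSFiniteKernel ((κ + η).withDensity
      fun x => κ.rnDeriv (κ + η) x ⊓ η.rnDeriv (κ + η) x) := hinf ▸ inferInstance
  calc ρ ⊗ₘ infKernel κ η
      = (ρ ⊗ₘ (κ + η)).withDensity ((fun p => κ.rnDeriv (κ + η) p.1 p.2) ⊓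
          fun p => η.rnDeriv (κ + η) p.1 p.2) := by
        rw [← hinf, Measure.compProd_withDensity (hκ.inf hη)]; rfl
    _ = (ρ ⊗ₘ κ) ⊓ (ρ ⊗ₘ η) := by
        rw [withDensity_inf _ hκ hη, ← Measure.compProd_withDensity hκ,
          ← Measure.compProd_withDensity hη, withDensity_rnDeriv_add_left,
          withDensity_rnDeriv_add_right]

end InfKernel

section DiagPart

variable {α β : Type*} {mα : MeasurableSpace α} {mβ : MeasurableSpace β}

/-- The part of `π` carried by the diagonal, as a measure on `α`: the law of `x` under the
restriction of `π(dx, dy)` to `x = y`. -/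
def diagPart (π : Measure (α × α)) : Measure α :=
  (π.restrict {q | q.1 = q.2}).map Prod.fst

lemma lintegral_diagPart (π : Measure (α × α)) {f : α → ℝ≥0∞} (hf : Measurable f) :
    ∫⁻ x, f x ∂diagPart π = ∫⁻ q in {q | q.1 = q.2}, f q.1 ∂π :=
  lintegral_map hf measurable_fst

lemma diagPart_apply (π : Measure (α × α)) {s : Set α} (hs : MeasurableSet s) :
    diagPart π s = π {q | q.1 = q.2 ∧ q.1 ∈ s} := by
  rw [diagPart, Measure.map_apply measurable_fst hs, Measure.restrict_apply (measurable_fst hs),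
    Set.inter_comm]
  rfl

instance (π : Measure (α × α)) [IsFiniteMeasure π] : IsFiniteMeasure (diagPart π) := by
  unfold diagPart; infer_instance

lemma diagPart_mono {π ρ : Measure (α × α)} (h : π ≤ ρ) : diagPart π ≤ diagPart ρ :=
  Measure.map_mono (Measure.restrict_mono le_rfl h) measurable_fst

lemma measurableSet_diag_inter [MeasurableEq α] {s : Set α} (hs : MeasurableSet s) :
    MeasurableSet {q : α × α | q.1 = q.2 ∧ q.1 ∈ s} :=
  (measurableSet_eq_fun measurable_fst measurable_snd).inter (measurable_fst hs)

lemma diagPart_map_prodMap [MeasurableEq β] {f : α → β} (hf : Measurable f)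
    (hinj : Function.Injective f) (π : Measure (α × α)) :
    diagPart (π.map (Prod.map f f)) = (diagPart π).map f := by
  ext s hs
  rw [diagPart_apply _ hs, Measure.map_apply hf hs, diagPart_apply _ (hf hs),
    Measure.map_apply (by fun_prop) (measurableSet_diag_inter hs)]
  simp [hinj.eq_iff]

variable [MeasurableEq α]

lemma diagPart_map_diag (ρ : Measure α) : diagPart (ρ.map fun x => (x, x)) = ρ := by
  ext s hs
  rw [diagPart_apply _ hs, Measure.map_apply (by fun_prop) (measurableSet_diag_inter hs)]
  simp

lemma diagPart_map_swap (π : Measure (α × α)) : diagPart (π.map Prod.swap) = diagPart π := by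
  ext s hs
  rw [diagPart_apply _ hs, diagPart_apply _ hs,
    Measure.map_apply measurable_swap (measurableSet_diag_inter hs)]
  congr 1 with ⟨x, y⟩
  constructor <;> rintro ⟨hxy, hs⟩ <;> cases hxy <;> exact ⟨rfl, hs⟩

lemma measurableSet_diag_prod_inter {s : Set (α × β)} (hs : MeasurableSet s) :
    MeasurableSet {q : (α × α) × β | q.1.1 = q.1.2 ∧ (q.1.1, q.2) ∈ s} :=
  (measurableSet_eq_fun (by fun_prop) (by fun_prop)).inter (hs.preimage (by fun_prop))

lemma diagPart_compProd_apply (ρ : Measure (α × α)) [IsFiniteMeasure ρ] (κ : Kernel α β)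
    [IsSFiniteKernel κ] {s : Set (α × β)} (hs : MeasurableSet s) :
    (diagPart ρ ⊗ₘ κ) s =
      (ρ ⊗ₘ κ.prodMkRight α) {q | q.1.1 = q.1.2 ∧ (q.1.1, q.2) ∈ s} := by
  rw [Measure.compProd_apply hs, Measure.compProd_apply (measurableSet_diag_prod_inter hs),
    lintegral_diagPart ρ (Kernel.measurable_kernel_prodMk_left hs),
    ← lintegral_indicator (measurableSet_eq_fun measurable_fst measurable_snd)]
  refine lintegral_congr fun q => ?_
  by_cases hq : q.1 = q.2 <;> simp [Set.indicator, Set.preimage, hq]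

lemma diagPart_compProd_le_diagPart_map [MeasurableEq (α × β)] (ρ : Measure (α × α))
    [IsFiniteMeasure ρ] {m : Kernel α β} [IsSFiniteKernel m] {K : Kernel (α × α) (β × β)}
    [IsSFiniteKernel K] (h : ∀ x, m x ≤ diagPart (K (x, x))) :
    diagPart ρ ⊗ₘ m ≤ diagPart ((ρ ⊗ₘ K).map fun q => ((q.1.1, q.2.1), (q.1.2, q.2.2))) := by
  refine Measure.le_iff.2 fun s hs => ?_
  have hdiag := measurableSet_diag_inter hs
  have hcomm : Measurable fun q : (α × α) × (β × β) => ((q.1.1, q.2.1), (q.1.2, q.2.2)) := by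
    fun_prop
  rw [diagPart_compProd_apply _ _ hs, diagPart_apply _ hs, Measure.map_apply hcomm hdiag,
    Measure.compProd_apply (measurableSet_diag_prod_inter hs), Measure.compProd_apply (hcomm hdiag)]
  refine lintegral_mono fun ⟨x, y⟩ => ?_
  by_cases hxy : x = y
  · subst hxy
    have := h x (Prod.mk x ⁻¹' s)
    rw [diagPart_apply _ (measurable_prodMk_left hs)] at this
    simpa [Set.preimage] using this
  · simp [hxy]

end DiagPart

section DiagonalCost

variable {α : Type*} {mα : MeasurableSpace α} {w : α → ℝ≥0∞}

lemma two_mul_lintegral_diagPart (π : Measure (α × α)) (hw : Measurable w) :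
    2 * ∫⁻ x, w x ∂diagPart π = ∫⁻ q in {q | q.1 = q.2}, 2 * w q.1 ∂π := by
  rw [lintegral_diagPart π hw, lintegral_const_mul _ (by fun_prop)]

lemma lintegral_ne_add_two_mul_lintegral_diagPart [MeasurableEq α] (π : Measure (α × α))
    (hw : Measurable w) :
    ∫⁻ q in {q | q.1 ≠ q.2}, (w q.1 + w q.2) ∂π + 2 * ∫⁻ x, w x ∂diagPart π =
      ∫⁻ x, w x ∂π.map Prod.fst + ∫⁻ x, w x ∂π.map Prod.snd := by
  have hmeas : MeasurableSet {q : α × α | q.1 = q.2} :=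
    measurableSet_eq_fun measurable_fst measurable_snd
  have hdiag : 2 * ∫⁻ x, w x ∂diagPart π = ∫⁻ q in {q | q.1 = q.2}, (w q.1 + w q.2) ∂π := by
    rw [two_mul_lintegral_diagPart π hw]
    refine setLIntegral_congr_fun hmeas fun q hq => ?_
    rw [Set.mem_ofPred_eq] at hq
    rw [two_mul, ← hq]
  calc ∫⁻ q in {q | q.1 ≠ q.2}, (w q.1 + w q.2) ∂π + 2 * ∫⁻ x, w x ∂diagPart π
      = ∫⁻ q, (w q.1 + w q.2) ∂π := by
        rw [hdiag, add_comm]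
        exact lintegral_add_compl _ hmeas
    _ = ∫⁻ x, w x ∂π.map Prod.fst + ∫⁻ x, w x ∂π.map Prod.snd := by
        rw [lintegral_add_left (by fun_prop), lintegral_map hw measurable_fst,
          lintegral_map hw measurable_snd]

variable {S : Set (Measure (α × α))} {ζ : Measure α}

lemma iSup_lintegral_diag_of_isGreatest (h : IsGreatest (diagPart '' S) ζ) (hw : Measurable w) :
    ⨆ π ∈ S, ∫⁻ q in {q | q.1 = q.2}, 2 * w q.1 ∂π = 2 * ∫⁻ x, w x ∂ζ := by
  simp_rw [← two_mul_lintegral_diagPart _ hw]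
  obtain ⟨⟨π₀, hπ₀, rfl⟩, hub⟩ := h
  refine le_antisymm (iSup₂_le fun π hπ => ?_) (le_iSup₂_of_le π₀ hπ₀ le_rfl)
  exact mul_le_mul_right (lintegral_mono' (hub ⟨π, hπ, rfl⟩) le_rfl) 2

lemma iInf_lintegral_ne_add_of_isGreatest [MeasurableEq α] {μ ν : Measure α} (hS : S ⊆ Cpl μ ν)
    (h : IsGreatest (diagPart '' S) ζ) (hw : Measurable w) :
    (⨅ π ∈ S, ∫⁻ q in {q | q.1 ≠ q.2}, (w q.1 + w q.2) ∂π) + 2 * ∫⁻ x, w x ∂ζ =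
      ∫⁻ x, w x ∂μ + ∫⁻ x, w x ∂ν := by
  have htotal {π} (hπ : π ∈ S) :
      ∫⁻ q in {q | q.1 ≠ q.2}, (w q.1 + w q.2) ∂π + 2 * ∫⁻ x, w x ∂diagPart π =
        ∫⁻ x, w x ∂μ + ∫⁻ x, w x ∂ν := by
    rw [lintegral_ne_add_two_mul_lintegral_diagPart π hw, (hS hπ).2.1, (hS hπ).2.2]
  obtain ⟨⟨π₀, hπ₀, rfl⟩, hub⟩ := h
  rw [ENNReal.iInf₂_add]
  refine le_antisymm (iInf₂_le_of_le π₀ hπ₀ (htotal hπ₀).le) (le_iInf₂ fun π hπ => ?_)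
  calc ∫⁻ x, w x ∂μ + ∫⁻ x, w x ∂ν
      = ∫⁻ q in {q | q.1 ≠ q.2}, (w q.1 + w q.2) ∂π + 2 * ∫⁻ x, w x ∂diagPart π :=
        (htotal hπ).symm
    _ ≤ ∫⁻ q in {q | q.1 ≠ q.2}, (w q.1 + w q.2) ∂π + 2 * ∫⁻ x, w x ∂diagPart π₀ := by
        gcongr
        exact hub ⟨π, hπ, rfl⟩

end DiagonalCost

section MaximalCoupling

variable {α β : Type*} {mα : MeasurableSpace α} {mβ : MeasurableSpace β}

lemma exists_kernel_add_eq_of_le {κ m : Kernel α β} [IsFiniteKernel κ] [IsFiniteKernel m]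
    (h : m ≤ κ) : ∃ r : Kernel α β, IsFiniteKernel r ∧ r + m = κ := by
  let r : Kernel α β :=
    { toFun x := κ x - m x
      measurable' := Measure.measurable_of_measurable_coe _ fun s hs => by
        simp_rw [Measure.sub_apply hs (h _)]
        exact (κ.measurable_coe hs).sub (m.measurable_coe hs) }
  exact ⟨r, isFiniteKernel_of_le (ν := κ) fun _ => Measure.sub_le,
    Kernel.ext fun x => Measure.sub_add_cancel_of_le (h x)⟩

-- For `ρ = 0` the scalar is `0⁻¹ = ∞`, which is harmless since it multiplies the zero measure.
lemma inv_measure_univ_smul_smul_self (ρ : Measure α) [IsFiniteMeasure ρ] :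
    (ρ Set.univ)⁻¹ • ρ Set.univ • ρ = ρ := by
  rcases eq_zero_or_neZero ρ with rfl | _
  · simp
  · rw [smul_smul, ENNReal.inv_mul_cancel (NeZero.ne _) (measure_ne_top _ _), one_smul]

lemma exists_kernel_map_fst_eq_map_snd_eq {r s : Kernel α β} [IsFiniteKernel r]
    [IsFiniteKernel s] (h : ∀ x, r x Set.univ = s x Set.univ) :
    ∃ P : Kernel α (β × β), P.map Prod.fst = r ∧ P.map Prod.snd = s := by
  have hd : Measurable fun p : α × (β × β) => (r p.1 Set.univ)⁻¹ :=
    (r.measurable_coe .univ).inv.comp measurable_fst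
  set P := (r ×ₖ s).withDensity fun x _ => (r x Set.univ)⁻¹
  have hP (x : α) : P x = (r x Set.univ)⁻¹ • (r x).prod (s x) := by
    rw [Kernel.withDensity_apply _ hd, withDensity_const, Kernel.prod_apply]
  refine ⟨P, Kernel.ext fun x => ?_, Kernel.ext fun x => ?_⟩
  · rw [Kernel.map_apply _ measurable_fst, hP, Measure.map_smul, Measure.map_fst_prod, ← h,
      inv_measure_univ_smul_smul_self]
  · rw [Kernel.map_apply _ measurable_snd, hP, Measure.map_smul, Measure.map_snd_prod, h,
      inv_measure_univ_smul_smul_self]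

lemma kernel_add_map_diag_map {P : Kernel α (β × β)} {m : Kernel α β} {f : β × β → β}
    (hf : Measurable f) (hdiag : ∀ y, f (y, y) = y) :
    (P + m.map fun y => (y, y)).map f = P.map f + m := by
  ext1 x
  have hm : ((m x).map fun y => (y, y)).map f = m x := by
    rw [Measure.map_map hf (by fun_prop)]
    simp [Function.comp_def, hdiag]
  rw [Kernel.map_apply _ hf, add_apply, add_apply, Measure.map_add _ _ hf,
    Kernel.map_apply _ (by fun_prop), hm, Kernel.map_apply _ hf]

lemma exists_kernel_coupling_le_diagPart [MeasurableEq β] {κ η m : Kernel α β} [IsMarkovKernel κ]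
    [IsMarkovKernel η] [IsFiniteKernel m] (hmκ : m ≤ κ) (hmη : m ≤ η) :
    ∃ K : Kernel α (β × β), IsMarkovKernel K ∧ K.map Prod.fst = κ ∧ K.map Prod.snd = η ∧
      ∀ x, m x ≤ diagPart (K x) := by
  obtain ⟨r, _, rfl⟩ := exists_kernel_add_eq_of_le hmκ
  obtain ⟨s, _, rfl⟩ := exists_kernel_add_eq_of_le hmη
  have hmass (x : α) : r x Set.univ = s x Set.univ := by
    have h : (r + m) x Set.univ = (s + m) x Set.univ := by simp only [measure_univ]
    exact (ENNReal.add_left_inj (measure_ne_top (m x) _)).1 h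
  obtain ⟨P, rfl, rfl⟩ := exists_kernel_map_fst_eq_map_snd_eq hmass
  set K := P + m.map fun y => (y, y)
  have hfst : K.map Prod.fst = P.map Prod.fst + m :=
    kernel_add_map_diag_map measurable_fst fun _ => rfl
  refine ⟨K, ⟨fun x => ?_⟩, hfst, kernel_add_map_diag_map measurable_snd fun _ => rfl, fun x => ?_⟩
  · have : IsProbabilityMeasure ((K x).map Prod.fst) := by
      rw [← Kernel.map_apply _ measurable_fst, hfst]
      infer_instance
    exact Measure.isProbabilityMeasure_of_map Prod.fst
  · calc m x = diagPart (m.map (fun y => (y, y)) x) := by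
          rw [Kernel.map_apply _ (by fun_prop), diagPart_map_diag]
      _ ≤ diagPart (K x) := diagPart_mono (Measure.le_add_left le_rfl)

end MaximalCoupling

section ConditionalIndependence

variable {α β γ Ω : Type*} {mα : MeasurableSpace α} {mβ : MeasurableSpace β}
  {mγ : MeasurableSpace γ} {mΩ : MeasurableSpace Ω}

lemma map_compProd_comap (ρ : Measure α) [IsFiniteMeasure ρ] (κ : Kernel β γ) [IsSFiniteKernel κ]
    {g : α → β} (hg : Measurable g) :
    (ρ ⊗ₘ κ.comap g hg).map (Prod.map g id) = ρ.map g ⊗ₘ κ := by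
  ext s hs
  rw [Measure.map_apply (by fun_prop) hs, Measure.compProd_apply (hs.preimage (by fun_prop)),
    Measure.compProd_apply hs, lintegral_map (Kernel.measurable_kernel_prodMk_left hs) hg]
  rfl

lemma condIndepFun_of_subsingleton [StandardBorelSpace Ω] [Subsingleton β] [Nonempty β]
    {P : Measure Ω} [IsFiniteMeasure P] {Z : Ω → α} (hZ : Measurable Z) (Y : Ω → β) (V : Ω → γ) :
    Y ⟂ᵢ[Z, hZ; P] V := by
  rw [show Y = fun _ => Classical.arbitrary β from Subsingleton.elim _ _]
  exact condIndepFun_const_left (hm' := hZ.comap_le) _ _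

variable [StandardBorelSpace Ω] [StandardBorelSpace γ] [Nonempty γ]
  {P : Measure Ω} [IsFiniteMeasure P] {V : Ω → γ}

lemma map_eq_compProd_of_condIndepFun [StandardBorelSpace β] [Nonempty β]
    {X : Ω → α} {Y : Ω → β} (hX : Measurable X) (hY : Measurable Y) (hV : Measurable V)
    {κ : Kernel α γ} [IsFiniteKernel κ] (hind : Y ⟂ᵢ[X, hX; P] V)
    (hκ : P.map (fun ω => (X ω, V ω)) = P.map X ⊗ₘ κ) :
    P.map (fun ω => ((X ω, Y ω), V ω)) = P.map (fun ω => (X ω, Y ω)) ⊗ₘ κ.prodMkRight β := by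
  rw [← condDistrib_ae_eq_iff_measure_eq_compProd _ hV.aemeasurable] at hκ ⊢
  have hfst : P.map X = (P.map fun ω => (X ω, Y ω)).map Prod.fst :=
    (Measure.map_map measurable_fst (hX.prodMk hY)).symm
  rw [hfst] at hκ
  exact ((condIndepFun_iff_condDistrib_prod_ae_eq_prodMkRight hV hY hX).1 hind).trans
    (ae_of_ae_map measurable_fst.aemeasurable hκ)

lemma condIndepFun_of_map_eq_compProd_comap [StandardBorelSpace α] [Nonempty α]
    {U : Ω → α} (hU : Measurable U) (hV : Measurable V) {g : α → β} (hg : Measurable g)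
    {κ : Kernel β γ} [IsFiniteKernel κ]
    (h : P.map (fun ω => (U ω, V ω)) = P.map U ⊗ₘ κ.comap g hg) :
    U ⟂ᵢ[fun ω => g (U ω), hg.comp hU; P] V := by
  have hlaw : P.map (fun ω => (g (U ω), V ω)) = P.map (fun ω => g (U ω)) ⊗ₘ κ := by
    have := congrArg (Measure.map (Prod.map g id)) h
    rwa [map_compProd_comap, Measure.map_map hg hU, Measure.map_map (by fun_prop) (by fun_prop)]
      at this
  have hlaw' : P.map (fun ω => ((g (U ω), U ω), V ω)) =
      P.map (fun ω => (g (U ω), U ω)) ⊗ₘ κ.prodMkRight α := by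
    have hgid : Measurable fun u => (g u, u) := by fun_prop
    have := congrArg (Measure.map (Prod.map (fun u => (g u, u)) id)) h
    rwa [show κ.comap g hg = (κ.prodMkRight α).comap _ hgid from rfl, map_compProd_comap,
      Measure.map_map hgid hU, Measure.map_map (by fun_prop) (by fun_prop)] at this
  refine (condIndepFun_iff_condDistrib_prod_ae_eq_prodMkRight hV hU (hg.comp hU)).2 ?_
  rw [← condDistrib_ae_eq_iff_measure_eq_compProd _ hV.aemeasurable] at hlaw hlaw'
  have hfst : P.map (fun ω => g (U ω)) = (P.map fun ω => (g (U ω), U ω)).map Prod.fst :=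
    (Measure.map_map measurable_fst ((hg.comp hU).prodMk hU)).symm
  rw [hfst] at hlaw
  exact hlaw'.trans (ae_of_ae_map measurable_fst.aemeasurable hlaw.symm)

end ConditionalIndependence

section DiagPartCondIndep

variable {α β Ω : Type*} {mα : MeasurableSpace α} {mβ : MeasurableSpace β}
  {mΩ : MeasurableSpace Ω} [StandardBorelSpace α] [Nonempty α] [StandardBorelSpace β] [Nonempty β]
  [StandardBorelSpace Ω] {P : Measure Ω} [IsFiniteMeasure P]
  {X Y : Ω → α} {V W : Ω → β}

lemma diagPart_map_le_compProd_left (hX : Measurable X) (hY : Measurable Y)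
    (hV : Measurable V) (hW : Measurable W) {κ : Kernel α β} [IsFiniteKernel κ]
    (hind : Y ⟂ᵢ[X, hX; P] V) (hκ : P.map (fun ω => (X ω, V ω)) = P.map X ⊗ₘ κ) :
    diagPart (P.map fun ω => ((X ω, V ω), (Y ω, W ω))) ≤
      diagPart (P.map fun ω => (X ω, Y ω)) ⊗ₘ κ := by
  refine Measure.le_iff.2 fun s hs => ?_
  rw [diagPart_compProd_apply _ _ hs, ← map_eq_compProd_of_condIndepFun hX hY hV hind hκ,
    diagPart_apply _ hs, Measure.map_apply (by fun_prop) (measurableSet_diag_inter hs),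
    Measure.map_apply (by fun_prop) (measurableSet_diag_prod_inter hs)]
  exact measure_mono fun ω ⟨h, hs⟩ => ⟨congrArg Prod.fst h, hs⟩

lemma diagPart_map_le_compProd_right (hX : Measurable X) (hY : Measurable Y)
    (hV : Measurable V) (hW : Measurable W) {η : Kernel α β} [IsFiniteKernel η]
    (hind : X ⟂ᵢ[Y, hY; P] W) (hη : P.map (fun ω => (Y ω, W ω)) = P.map Y ⊗ₘ η) :
    diagPart (P.map fun ω => ((X ω, V ω), (Y ω, W ω))) ≤
      diagPart (P.map fun ω => (X ω, Y ω)) ⊗ₘ η := by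
  have h := diagPart_map_le_compProd_left hY hX hW hV hind hη
  rw [← diagPart_map_swap (P.map fun ω => (Y ω, X ω)), ← diagPart_map_swap,
    Measure.map_map measurable_swap (by fun_prop),
    Measure.map_map measurable_swap (by fun_prop)] at h
  exact h

lemma diagPart_map_le_compProd_infKernel (hX : Measurable X) (hY : Measurable Y)
    (hV : Measurable V) (hW : Measurable W) {κ η : Kernel α β} [IsFiniteKernel κ]
    [IsFiniteKernel η]
    (hκind : Y ⟂ᵢ[X, hX; P] V) (hκ : P.map (fun ω => (X ω, V ω)) = P.map X ⊗ₘ κ)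
    (hηind : X ⟂ᵢ[Y, hY; P] W) (hη : P.map (fun ω => (Y ω, W ω)) = P.map Y ⊗ₘ η) :
    diagPart (P.map fun ω => ((X ω, V ω), (Y ω, W ω))) ≤
      diagPart (P.map fun ω => (X ω, Y ω)) ⊗ₘ infKernel κ η := by
  rw [compProd_infKernel]
  exact le_inf (diagPart_map_le_compProd_left hX hY hV hW hκind hκ)
    (diagPart_map_le_compProd_right hX hY hV hW hηind hη)

end DiagPartCondIndep

section KernelComp

variable {α β γ : Type*} {mα : MeasurableSpace α} {mβ : MeasurableSpace β}
  {mγ : MeasurableSpace γ}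

lemma map_prodMk_of_map_eq_id [MeasurableSingletonClass α] {κ : Kernel α β} [IsSFiniteKernel κ]
    {r : β → α} (hr : Measurable r) (h : κ.map r = Kernel.id) {f : β → γ} (hf : Measurable f) :
    κ.map (fun y => (r y, f y)) = Kernel.id ×ₖ κ.map f := by
  ext1 x
  have hx : ∀ᵐ y ∂κ x, r y = x := by
    refine ae_of_ae_map hr.aemeasurable (p := fun z => z = x) ?_
    rw [← Kernel.map_apply κ hr, h, Kernel.id_apply, ae_dirac_eq]
    rfl
  rw [Kernel.map_apply _ (by fun_prop), Kernel.prod_apply, Kernel.id_apply, Measure.dirac_prod,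
    Kernel.map_apply _ hf, Measure.map_map measurable_prodMk_left hf]
  exact Measure.map_congr (hx.mono fun y hy => congrArg (·, f y) hy)

lemma map_prodMk_comp_of_map_eq_id [MeasurableSingletonClass α] {κ : Kernel α β}
    [IsSFiniteKernel κ] {r : β → α} (hr : Measurable r) (h : κ.map r = Kernel.id) {f : β → γ}
    (hf : Measurable f) (ρ : Measure α) [SFinite ρ] :
    (κ ∘ₘ ρ).map (fun y => (r y, f y)) = ρ ⊗ₘ κ.map f := by
  rw [Measure.map_comp _ _ (by fun_prop), map_prodMk_of_map_eq_id hr h hf,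
    Measure.compProd_eq_comp_prod]

lemma eq_dirac_of_subsingleton [Subsingleton α] (ρ : Measure α) [IsProbabilityMeasure ρ] (x : α) :
    ρ = .dirac x := by
  ext s -
  rcases s.eq_empty_or_nonempty with rfl | hs
  · simp
  · simp [Subsingleton.eq_univ_of_nonempty hs]

lemma comp_mono_left {ρ σ : Measure α} (h : ρ ≤ σ) (κ : Kernel α β) : κ ∘ₘ ρ ≤ κ ∘ₘ σ := by
  refine Measure.le_iff.2 fun s hs => ?_
  rw [Measure.bind_apply hs κ.aemeasurable, Measure.bind_apply hs κ.aemeasurable]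
  exact lintegral_mono' h le_rfl

end KernelComp

section Chains

variable {E : ℕ → Type*} [∀ t, MeasurableSpace (E t)]

/-- The law at time `t` of the Markov chain with initial law `ρ` and one-step kernels `S`. The
state space may change with time, and the kernels need not be Markov. -/
def chainLaw (S : ∀ t, Kernel (E t) (E (t + 1))) (ρ : Measure (E 0)) : ∀ t, Measure (E t)
  | 0 => ρ
  | t + 1 => S t ∘ₘ chainLaw S ρ t

/-- The kernel from time `s` to time `t` of the Markov chain with one-step kernels `S`. -/
def transition (S : ∀ t, Kernel (E t) (E (t + 1))) {s t : ℕ} (h : s ≤ t) : Kernel (E s) (E t) :=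
  Nat.leRec (motive := fun n _ => Kernel (E s) (E n)) Kernel.id (fun n _ κ => S n ∘ₖ κ) h

variable {S : ∀ t, Kernel (E t) (E (t + 1))} {ρ : Measure (E 0)}

lemma transition_self (s : ℕ) : transition S (le_refl s) = Kernel.id := Nat.leRec_self _ _

lemma transition_succ {s t : ℕ} (h : s ≤ t) :
    transition S (Nat.le_succ_of_le h) = S t ∘ₖ transition S h := Nat.leRec_succ _ _ _

instance [IsFiniteMeasure ρ] [∀ t, IsFiniteKernel (S t)] (t : ℕ) :
    IsFiniteMeasure (chainLaw S ρ t) := by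
  induction t with
  | zero => assumption
  | succ t _ => exact inferInstanceAs (IsFiniteMeasure (S t ∘ₘ chainLaw S ρ t))

instance [IsProbabilityMeasure ρ] [∀ t, IsMarkovKernel (S t)] (t : ℕ) :
    IsProbabilityMeasure (chainLaw S ρ t) := by
  induction t with
  | zero => assumption
  | succ t _ => exact inferInstanceAs (IsProbabilityMeasure (S t ∘ₘ chainLaw S ρ t))

instance [∀ t, IsMarkovKernel (S t)] {s t : ℕ} (h : s ≤ t) : IsMarkovKernel (transition S h) := by
  induction t, h using Nat.le_induction with
  | base => rw [transition_self]; infer_instance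
  | succ t h _ => rw [transition_succ h]; infer_instance

lemma transition_comp_chainLaw {s t : ℕ} (h : s ≤ t) :
    transition S h ∘ₘ chainLaw S ρ s = chainLaw S ρ t := by
  induction t, h using Nat.le_induction with
  | base => rw [transition_self, Measure.id_comp]
  | succ t h ih => rw [transition_succ h, ← Measure.comp_assoc, ih, chainLaw]

variable {F : ℕ → Type*} [∀ t, MeasurableSpace (F t)] {R : ∀ t, Kernel (F t) (F (t + 1))}
  {φ : ∀ t, E t → F t}

lemma map_transition (hφ : ∀ t, Measurable (φ t))
    (h : ∀ t, (S t).map (φ (t + 1)) = (R t).comap (φ t) (hφ t)) {s t : ℕ} (hst : s ≤ t) :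
    (transition S hst).map (φ t) = (transition R hst).comap (φ s) (hφ s) := by
  induction t, hst using Nat.le_induction with
  | base => rw [transition_self, transition_self, Kernel.id_map (hφ s), Kernel.id_comap]
  | succ t hst ih =>
    rw [transition_succ hst, transition_succ hst, Kernel.map_comp, h,
      ← Kernel.comp_deterministic_eq_comap, Kernel.comp_assoc,
      Kernel.deterministic_comp_eq_map, ih, ← Kernel.comp_deterministic_eq_comap,
      ← Kernel.comp_assoc, Kernel.comp_deterministic_eq_comap]

lemma map_chainLaw (hφ : ∀ t, Measurable (φ t))
    (h : ∀ t, (S t).map (φ (t + 1)) = (R t).comap (φ t) (hφ t)) (t : ℕ) :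
    (chainLaw S ρ t).map (φ t) = chainLaw R (ρ.map (φ 0)) t := by
  induction t with
  | zero => rfl
  | succ t ih =>
    rw [chainLaw, chainLaw, Measure.map_comp _ _ (hφ _), h, ← ih,
      ← Kernel.comp_deterministic_eq_comap, ← Measure.comp_assoc,
      Measure.deterministic_comp_eq_map]

end Chains

section ChainConditionalIndependence

variable {E F : ℕ → Type*} [∀ t, MeasurableSpace (E t)] [∀ t, MeasurableSpace (F t)]
  [∀ t, StandardBorelSpace (E t)] [∀ t, Nonempty (E t)]
  [∀ t, StandardBorelSpace (F t)] [∀ t, Nonempty (F t)]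
  {S : ∀ t, Kernel (E t) (E (t + 1))} [∀ t, IsMarkovKernel (S t)]
  {R : ∀ t, Kernel (F t) (F (t + 1))} [∀ t, IsMarkovKernel (R t)]

lemma condIndepFun_chainLaw {φ : ∀ t, E t → F t} (hφ : ∀ t, Measurable (φ t))
    (h : ∀ t, (S t).map (φ (t + 1)) = (R t).comap (φ t) (hφ t)) {s t : ℕ} (hst : s ≤ t)
    {r : E t → E s} (hr : Measurable r) (hid : (transition S hst).map r = Kernel.id)
    (ρ : Measure (E 0)) [IsFiniteMeasure ρ] :
    r ⟂ᵢ[fun x => φ s (r x), (hφ s).comp hr; chainLaw S ρ t] φ t := by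
  refine condIndepFun_of_map_eq_compProd_comap hr (hφ t) (hφ s) (κ := transition R hst) ?_
  rw [← transition_comp_chainLaw hst, map_prodMk_comp_of_map_eq_id hr hid (hφ t),
    map_transition hφ h, Measure.map_comp _ _ hr, hid, Measure.id_comp]

end ChainConditionalIndependence

section Paths

variable {d : ℕ}

/-- The identification of a path of length `t + 1` with the pair of its first `t` states and its
last state, in the order in which `ρ ⊗ₘ κ` is a law on such pairs. -/
def snocEquiv (d t : ℕ) : Traj d t × (Fin d → ℝ) ≃ᵐ Traj d (t + 1) where
  toFun p := Fin.snoc p.1 p.2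
  invFun x := (Fin.init x, x (Fin.last t))
  left_inv p := by simp
  right_inv x := by simp
  measurable_toFun := (continuous_fst.finSnoc continuous_snd).measurable
  measurable_invFun := by
    refine Measurable.prodMk (measurable_pi_lambda _ fun i => ?_) ?_ <;>
      exact measurable_pi_apply _

lemma restr_snocEquiv {t : ℕ} (p : Traj d t × (Fin d → ℝ)) :
    restr d (Nat.le_succ t) (snocEquiv d t p) = p.1 :=
  Fin.init_snoc (α := fun _ => Fin d → ℝ) p.2 p.1

lemma snocEquiv_restr {t T : ℕ} (h : t + 1 ≤ T) (x : Traj d T) :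
    snocEquiv d t (restr d (Nat.le_of_succ_le h) x, x ⟨t, h⟩) = restr d h x :=
  Fin.snoc_init_self (restr d h x)

/-- The one-step kernel of the process of growing paths: it keeps the path `x` seen so far and
appends a state drawn from `κ x`. -/
def snocKernel {t : ℕ} (κ : Kernel (Traj d t) (Fin d → ℝ)) :
    Kernel (Traj d t) (Traj d (t + 1)) :=
  (Kernel.id ×ₖ κ).map (snocEquiv d t)

instance {t : ℕ} (κ : Kernel (Traj d t) (Fin d → ℝ)) [IsMarkovKernel κ] :
    IsMarkovKernel (snocKernel κ) := Kernel.IsMarkovKernel.map _ (snocEquiv d t).measurable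

lemma snocKernel_apply {t : ℕ} (κ : Kernel (Traj d t) (Fin d → ℝ)) [IsSFiniteKernel κ]
    (x : Traj d t) : snocKernel κ x = (κ x).map (Fin.snoc x) := by
  have hsnoc := (snocEquiv d t).measurable
  rw [snocKernel, Kernel.map_apply _ hsnoc, Kernel.prod_apply, Kernel.id_apply,
    Measure.dirac_prod, Measure.map_map hsnoc measurable_prodMk_left]
  rfl

lemma snocKernel_comp {t : ℕ} (κ : Kernel (Traj d t) (Fin d → ℝ)) [IsSFiniteKernel κ]
    (ρ : Measure (Traj d t)) [SFinite ρ] :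
    snocKernel κ ∘ₘ ρ = (ρ ⊗ₘ κ).map (snocEquiv d t) := by
  rw [snocKernel, ← Measure.map_comp _ _ (snocEquiv d t).measurable,
    Measure.compProd_eq_comp_prod]

/-- The law of the path of length `t` whose successive states are drawn from the kernels `κ`. -/
def pathLaw (κ : ∀ t, Kernel (Traj d t) (Fin d → ℝ)) (t : ℕ) : Measure (Traj d t) :=
  chainLaw (E := Traj d) (fun t => snocKernel (κ t)) (.dirac default) t

lemma pathLaw_succ (κ : ∀ t, Kernel (Traj d t) (Fin d → ℝ)) (t : ℕ) :
    pathLaw κ (t + 1) = snocKernel (κ t) ∘ₘ pathLaw κ t := rfl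

lemma iterComp_eq_pathLaw (κ : ∀ t, Kernel (Traj d t) (Fin d → ℝ))
    [∀ t, IsSFiniteKernel (κ t)] (t : ℕ) : iterComp d (fun t x => κ t x) t = pathLaw κ t := by
  induction t with
  | zero => exact congrArg Measure.dirac (Subsingleton.elim _ _)
  | succ t ih =>
    rw [iterComp, ih, pathLaw_succ]
    congr 1 with x : 1
    exact (snocKernel_apply (κ t) x).symm

/-- The kernels `κ` disintegrate `μ` along time: `κ t` is the conditional law of the state at
time `t + 1` given the path up to time `t`. -/
def IsDisintegration {T : ℕ} (μ : Measure (Traj d T))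
    (κ : ∀ t, Kernel (Traj d t) (Fin d → ℝ)) : Prop :=
  ∀ t, ∀ h : t + 1 ≤ T, μ.map (restr d h) =
    (μ.map (restr d (Nat.le_of_succ_le h))).bind fun x => (κ t x).map (Fin.snoc x)

namespace IsDisintegration

variable {T : ℕ} {μ : Measure (Traj d T)} {κ : ∀ t, Kernel (Traj d t) (Fin d → ℝ)}
  [∀ t, IsSFiniteKernel (κ t)]

lemma map_restr_succ (hμ : IsDisintegration μ κ) {t : ℕ} (h : t + 1 ≤ T) :
    μ.map (restr d h) = snocKernel (κ t) ∘ₘ μ.map (restr d (Nat.le_of_succ_le h)) := by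
  rw [hμ t h]
  congr 1 with x : 1
  exact (snocKernel_apply (κ t) x).symm

lemma map_restr_prodMk [SFinite μ] (hμ : IsDisintegration μ κ) {t : ℕ} (h : t + 1 ≤ T) :
    μ.map (fun x => (restr d (Nat.le_of_succ_le h) x, x ⟨t, h⟩)) =
      μ.map (restr d (Nat.le_of_succ_le h)) ⊗ₘ κ t := by
  have hr := measurable_restr d (Nat.le_of_succ_le h)
  refine (snocEquiv d t).map_measurableEquiv_injective ?_
  rw [← snocKernel_comp, ← hμ.map_restr_succ h,
    Measure.map_map (snocEquiv d t).measurable (hr.prodMk (measurable_pi_apply _))]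
  exact congrArg μ.map (funext fun x => snocEquiv_restr h x)

lemma map_restr_eq_pathLaw [IsProbabilityMeasure μ] (hμ : IsDisintegration μ κ) {t : ℕ}
    (h : t ≤ T) : μ.map (restr d h) = pathLaw κ t := by
  induction t with
  | zero =>
    have := Measure.isProbabilityMeasure_map (μ := μ) (measurable_restr d h).aemeasurable
    exact eq_dirac_of_subsingleton _ _
  | succ t ih => rw [hμ.map_restr_succ h, ih, pathLaw_succ]

lemma eq_pathLaw [IsProbabilityMeasure μ] (hμ : IsDisintegration μ κ) : μ = pathLaw κ T := by
  rw [← hμ.map_restr_eq_pathLaw le_rfl]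
  exact Measure.map_id.symm

end IsDisintegration

end Paths

section UpperBound

variable {d T : ℕ} {π : Measure (Traj d T × Traj d T)}

lemma measurable_restr_fst {t : ℕ} (h : t ≤ T) :
    Measurable fun ω : Traj d T × Traj d T => restr d h ω.1 :=
  (measurable_restr d h).comp measurable_fst

lemma measurable_restr_snd {t : ℕ} (h : t ≤ T) :
    Measurable fun ω : Traj d T × Traj d T => restr d h ω.2 :=
  (measurable_restr d h).comp measurable_snd

lemma IsBicausal.condIndepFun_fst [IsFiniteMeasure π] (hπ : IsBicausal d T π) {t : ℕ}
    (h : t + 1 ≤ T) :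
    (fun ω => restr d (Nat.le_of_succ_le h) ω.2) ⟂ᵢ[
      fun ω => restr d (Nat.le_of_succ_le h) ω.1, measurable_restr_fst (Nat.le_of_succ_le h); π]
      fun ω => ω.1 ⟨t, h⟩ := by
  rcases Nat.eq_zero_or_pos t with rfl | ht
  · exact condIndepFun_of_subsingleton (measurable_restr_fst _) _ _
  · exact CondIndepFun.comp (hπ t ht h).1 measurable_id (measurable_pi_apply (⟨t, h⟩ : Fin T))

lemma IsBicausal.condIndepFun_snd [IsFiniteMeasure π] (hπ : IsBicausal d T π) {t : ℕ}
    (h : t + 1 ≤ T) :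
    (fun ω => restr d (Nat.le_of_succ_le h) ω.1) ⟂ᵢ[
      fun ω => restr d (Nat.le_of_succ_le h) ω.2, measurable_restr_snd (Nat.le_of_succ_le h); π]
      fun ω => ω.2 ⟨t, h⟩ := by
  rcases Nat.eq_zero_or_pos t with rfl | ht
  · exact condIndepFun_of_subsingleton (measurable_restr_snd _) _ _
  · exact CondIndepFun.comp (hπ t ht h).2 measurable_id (measurable_pi_apply (⟨t, h⟩ : Fin T))

variable {κ η : ∀ t, Kernel (Traj d t) (Fin d → ℝ)} [∀ t, IsFiniteKernel (κ t)]
  [∀ t, IsFiniteKernel (η t)]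

lemma IsBicausal.diagPart_map_next_le [IsFiniteMeasure π] (hπ : IsBicausal d T π)
    (hκ : IsDisintegration (π.map Prod.fst) κ) (hη : IsDisintegration (π.map Prod.snd) η)
    {t : ℕ} (h : t + 1 ≤ T) :
    diagPart (π.map fun ω => ((restr d (Nat.le_of_succ_le h) ω.1, ω.1 ⟨t, h⟩),
        (restr d (Nat.le_of_succ_le h) ω.2, ω.2 ⟨t, h⟩))) ≤
      diagPart (π.map (Prod.map (restr d (Nat.le_of_succ_le h)) (restr d (Nat.le_of_succ_le h))))
        ⊗ₘ infKernel (κ t) (η t) := by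
  have hr := measurable_restr d (Nat.le_of_succ_le h)
  have hv : Measurable fun x : Traj d T => x ⟨t, h⟩ := measurable_pi_apply _
  have hκ' := hκ.map_restr_prodMk h
  have hη' := hη.map_restr_prodMk h
  rw [Measure.map_map (hr.prodMk hv) measurable_fst, Measure.map_map hr measurable_fst] at hκ'
  rw [Measure.map_map (hr.prodMk hv) measurable_snd, Measure.map_map hr measurable_snd] at hη'
  exact diagPart_map_le_compProd_infKernel (measurable_restr_fst _) (measurable_restr_snd _)
    (hv.comp measurable_fst) (hv.comp measurable_snd) (hπ.condIndepFun_fst h) hκ'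
    (hπ.condIndepFun_snd h) hη'

lemma IsBicausal.diagPart_map_restr_le [IsProbabilityMeasure π] (hπ : IsBicausal d T π)
    (hκ : IsDisintegration (π.map Prod.fst) κ) (hη : IsDisintegration (π.map Prod.snd) η)
    {t : ℕ} (h : t ≤ T) :
    diagPart (π.map (Prod.map (restr d h) (restr d h))) ≤
      pathLaw (fun t => infKernel (κ t) (η t)) t := by
  induction t with
  | zero =>
    have hr := measurable_restr d h
    have := Measure.isProbabilityMeasure_map (μ := π)
      (measurable_restr_fst (d := d) h).aemeasurable
    calc diagPart (π.map (Prod.map (restr d h) (restr d h)))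
        ≤ (π.map (Prod.map (restr d h) (restr d h))).map Prod.fst :=
          Measure.map_mono Measure.restrict_le_self measurable_fst
      _ = π.map fun ω => restr d h ω.1 := Measure.map_map measurable_fst (by fun_prop)
      _ = pathLaw (fun t => infKernel (κ t) (η t)) 0 := eq_dirac_of_subsingleton _ _
  | succ t ih =>
    set r := restr d (Nat.le_of_succ_le h)
    have hr : Measurable r := measurable_restr d _
    have hsnoc := (snocEquiv d t).measurable
    calc diagPart (π.map (Prod.map (restr d h) (restr d h)))
        = diagPart ((π.map fun ω => ((r ω.1, ω.1 ⟨t, h⟩), (r ω.2, ω.2 ⟨t, h⟩))).map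
            (Prod.map (snocEquiv d t) (snocEquiv d t))) := by
          rw [Measure.map_map (by fun_prop) (by fun_prop)]
          simp only [Function.comp_def, snocEquiv_restr, r, Prod.map_def]
      _ = (diagPart (π.map fun ω => ((r ω.1, ω.1 ⟨t, h⟩), (r ω.2, ω.2 ⟨t, h⟩)))).map
            (snocEquiv d t) := diagPart_map_prodMap hsnoc (snocEquiv d t).injective _
      _ ≤ (diagPart (π.map (Prod.map r r)) ⊗ₘ infKernel (κ t) (η t)).map (snocEquiv d t) :=
          Measure.map_mono (hπ.diagPart_map_next_le hκ hη h) hsnoc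
      _ = snocKernel (infKernel (κ t) (η t)) ∘ₘ diagPart (π.map (Prod.map r r)) :=
          (snocKernel_comp _ _).symm
      _ ≤ pathLaw (fun t => infKernel (κ t) (η t)) (t + 1) := comp_mono_left (ih _) _

end UpperBound

section PairedPaths

variable {d : ℕ}

/-- The one-step kernel of a pair of growing paths: it keeps both paths `(x, y)` seen so far and
appends a pair of states drawn from `K (x, y)`. -/
def pairSnocKernel {t : ℕ} (K : Kernel (Traj d t × Traj d t) ((Fin d → ℝ) × (Fin d → ℝ))) :
    Kernel (Traj d t × Traj d t) (Traj d (t + 1) × Traj d (t + 1)) :=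
  (Kernel.id ×ₖ K).map fun q => (snocEquiv d t (q.1.1, q.2.1), snocEquiv d t (q.1.2, q.2.2))

lemma measurable_pairSnoc (d t : ℕ) :
    Measurable fun q : (Traj d t × Traj d t) × ((Fin d → ℝ) × (Fin d → ℝ)) =>
      (snocEquiv d t (q.1.1, q.2.1), snocEquiv d t (q.1.2, q.2.2)) := by
  have := (snocEquiv d t).measurable
  fun_prop

instance {t : ℕ} (K : Kernel (Traj d t × Traj d t) ((Fin d → ℝ) × (Fin d → ℝ)))
    [IsMarkovKernel K] : IsMarkovKernel (pairSnocKernel K) :=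
  Kernel.IsMarkovKernel.map _ (measurable_pairSnoc d t)

section OneStep

variable {t : ℕ} {K : Kernel (Traj d t × Traj d t) ((Fin d → ℝ) × (Fin d → ℝ))}

lemma pairSnocKernel_apply [IsSFiniteKernel K] (q : Traj d t × Traj d t) :
    pairSnocKernel K q =
      (K q).map fun v => (snocEquiv d t (q.1, v.1), snocEquiv d t (q.2, v.2)) := by
  rw [pairSnocKernel, Kernel.map_apply _ (measurable_pairSnoc d t), Kernel.prod_apply,
    Kernel.id_apply, Measure.dirac_prod,
    Measure.map_map (measurable_pairSnoc d t) measurable_prodMk_left]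
  rfl

lemma pairSnocKernel_comp [IsSFiniteKernel K] (ρ : Measure (Traj d t × Traj d t)) [SFinite ρ] :
    pairSnocKernel K ∘ₘ ρ =
      ((ρ ⊗ₘ K).map fun q => ((q.1.1, q.2.1), (q.1.2, q.2.2))).map
        (Prod.map (snocEquiv d t) (snocEquiv d t)) := by
  have hsnoc := (snocEquiv d t).measurable
  rw [pairSnocKernel, ← Measure.map_comp _ _ (measurable_pairSnoc d t),
    Measure.compProd_eq_comp_prod, Measure.map_map (by fun_prop) (by fun_prop)]
  rfl

lemma pairSnocKernel_map_fst [IsSFiniteKernel K] {κ : Kernel (Traj d t) (Fin d → ℝ)}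
    [IsSFiniteKernel κ] (hK : K.map Prod.fst = κ.comap Prod.fst measurable_fst) :
    (pairSnocKernel K).map Prod.fst = (snocKernel κ).comap Prod.fst measurable_fst := by
  ext1 q
  have hpair := (snocEquiv d t).measurable
  have hsnoc : Measurable (Fin.snoc (α := fun _ => Fin d → ℝ) q.1) :=
    hpair.comp measurable_prodMk_left
  have hq : (K q).map Prod.fst = κ q.1 := by rw [← Kernel.map_apply _ measurable_fst, hK]; rfl
  rw [Kernel.map_apply _ measurable_fst, pairSnocKernel_apply, Kernel.comap_apply,
    snocKernel_apply, ← hq, Measure.map_map measurable_fst (by fun_prop),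
    Measure.map_map hsnoc measurable_fst]
  rfl

lemma pairSnocKernel_map_snd [IsSFiniteKernel K] {η : Kernel (Traj d t) (Fin d → ℝ)}
    [IsSFiniteKernel η] (hK : K.map Prod.snd = η.comap Prod.snd measurable_snd) :
    (pairSnocKernel K).map Prod.snd = (snocKernel η).comap Prod.snd measurable_snd := by
  ext1 q
  have hpair := (snocEquiv d t).measurable
  have hsnoc : Measurable (Fin.snoc (α := fun _ => Fin d → ℝ) q.2) :=
    hpair.comp measurable_prodMk_left
  have hq : (K q).map Prod.snd = η q.2 := by rw [← Kernel.map_apply _ measurable_snd, hK]; rfl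
  rw [Kernel.map_apply _ measurable_snd, pairSnocKernel_apply, Kernel.comap_apply,
    snocKernel_apply, ← hq, Measure.map_map measurable_snd (by fun_prop),
    Measure.map_map hsnoc measurable_snd]
  rfl

lemma pairSnocKernel_map_restr [IsMarkovKernel K] :
    (pairSnocKernel K).map
      (Prod.map (restr d (Nat.le_succ t)) (restr d (Nat.le_succ t))) = Kernel.id := by
  ext1 q
  have hr := measurable_restr d (Nat.le_succ t)
  have hsnoc := (snocEquiv d t).measurable
  rw [Kernel.map_apply _ (by fun_prop), pairSnocKernel_apply,
    Measure.map_map (by fun_prop) (by fun_prop), Kernel.id_apply]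
  simp [Function.comp_def, restr_snocEquiv]

end OneStep

variable {K : ∀ t, Kernel (Traj d t × Traj d t) ((Fin d → ℝ) × (Fin d → ℝ))}

lemma transition_pairSnocKernel_map_restr [∀ t, IsMarkovKernel (K t)] {s t : ℕ} (h : s ≤ t) :
    (transition (E := fun t => Traj d t × Traj d t) (fun t => pairSnocKernel (K t)) h).map
      (Prod.map (restr d h) (restr d h)) = Kernel.id := by
  induction t, h using Nat.le_induction with
  | base => rw [transition_self]; exact Kernel.map_id _
  | succ t h ih =>
    have hr := measurable_restr d h
    have hr' := measurable_restr d (Nat.le_succ t)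
    have hcomp : Prod.map (restr d (Nat.le_succ_of_le h)) (restr d (Nat.le_succ_of_le h)) =
      Prod.map (restr d h) (restr d h) ∘
        Prod.map (restr d (Nat.le_succ t)) (restr d (Nat.le_succ t)) := rfl
    rw [transition_succ h, hcomp, Kernel.map_comp_right _ (by fun_prop) (by fun_prop),
      Kernel.map_comp, pairSnocKernel_map_restr, Kernel.id_comp, ih]

/-- The law of the pair of paths of length `t` whose successive pairs of states are drawn from
the kernels `K`. -/
def pairPathLaw (K : ∀ t, Kernel (Traj d t × Traj d t) ((Fin d → ℝ) × (Fin d → ℝ))) (t : ℕ) :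
    Measure (Traj d t × Traj d t) :=
  chainLaw (E := fun t => Traj d t × Traj d t) (fun t => pairSnocKernel (K t)) (.dirac default) t

instance [∀ t, IsMarkovKernel (K t)] (t : ℕ) : IsProbabilityMeasure (pairPathLaw K t) := by
  unfold pairPathLaw; infer_instance

lemma pairPathLaw_succ (t : ℕ) :
    pairPathLaw K (t + 1) = pairSnocKernel (K t) ∘ₘ pairPathLaw K t := rfl

variable [∀ t, IsMarkovKernel (K t)] {κ η : ∀ t, Kernel (Traj d t) (Fin d → ℝ)}

lemma pairPathLaw_map_fst [∀ t, IsSFiniteKernel (κ t)]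
    (hK : ∀ t, (K t).map Prod.fst = (κ t).comap Prod.fst measurable_fst) (t : ℕ) :
    (pairPathLaw K t).map Prod.fst = pathLaw κ t := by
  refine (map_chainLaw (E := fun t => Traj d t × Traj d t) (F := Traj d)
    (φ := fun _ => Prod.fst) (fun _ => measurable_fst)
    (fun t => pairSnocKernel_map_fst (hK t)) t).trans ?_
  rw [Measure.map_dirac' measurable_fst]
  rfl

lemma pairPathLaw_map_snd [∀ t, IsSFiniteKernel (η t)]
    (hK : ∀ t, (K t).map Prod.snd = (η t).comap Prod.snd measurable_snd) (t : ℕ) :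
    (pairPathLaw K t).map Prod.snd = pathLaw η t := by
  refine (map_chainLaw (E := fun t => Traj d t × Traj d t) (F := Traj d)
    (φ := fun _ => Prod.snd) (fun _ => measurable_snd)
    (fun t => pairSnocKernel_map_snd (hK t)) t).trans ?_
  rw [Measure.map_dirac' measurable_snd]
  rfl

lemma isBicausal_pairPathLaw [∀ t, IsMarkovKernel (κ t)] [∀ t, IsMarkovKernel (η t)]
    (hfst : ∀ t, (K t).map Prod.fst = (κ t).comap Prod.fst measurable_fst)
    (hsnd : ∀ t, (K t).map Prod.snd = (η t).comap Prod.snd measurable_snd) (T : ℕ) :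
    IsBicausal d T (pairPathLaw K T) := by
  intro t _ h
  have hr := measurable_restr d (Nat.le_of_succ_le h)
  have hid := transition_pairSnocKernel_map_restr (K := K) (Nat.le_of_succ_le h)
  have hX := condIndepFun_chainLaw (E := fun t => Traj d t × Traj d t) (F := Traj d)
    (φ := fun _ => Prod.fst) (fun _ => measurable_fst)
    (fun t => pairSnocKernel_map_fst (hfst t)) (Nat.le_of_succ_le h) (hr.prodMap hr) hid
    (.dirac default)
  have hY := condIndepFun_chainLaw (E := fun t => Traj d t × Traj d t) (F := Traj d)
    (φ := fun _ => Prod.snd) (fun _ => measurable_snd)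
    (fun t => pairSnocKernel_map_snd (hsnd t)) (Nat.le_of_succ_le h) (hr.prodMap hr) hid
    (.dirac default)
  exact ⟨hX.comp measurable_snd measurable_id, hY.comp measurable_fst measurable_id⟩

lemma pathLaw_le_diagPart_pairPathLaw {m : ∀ t, Kernel (Traj d t) (Fin d → ℝ)}
    [∀ t, IsSFiniteKernel (m t)] (h : ∀ t x, m t x ≤ diagPart (K t (x, x))) (t : ℕ) :
    pathLaw m t ≤ diagPart (pairPathLaw K t) := by
  induction t with
  | zero =>
    have hdiag : (pathLaw m 0).map (fun x => (x, x)) = pairPathLaw K 0 :=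
      Measure.map_dirac' (f := fun x : Traj d 0 => (x, x)) (by fun_prop) default
    rw [← hdiag, diagPart_map_diag]
  | succ t ih =>
    have hsnoc := (snocEquiv d t).measurable
    calc pathLaw m (t + 1)
        ≤ snocKernel (m t) ∘ₘ diagPart (pairPathLaw K t) := comp_mono_left ih _
      _ = (diagPart (pairPathLaw K t) ⊗ₘ m t).map (snocEquiv d t) := snocKernel_comp _ _
      _ ≤ (diagPart ((pairPathLaw K t ⊗ₘ K t).map
            fun q => ((q.1.1, q.2.1), (q.1.2, q.2.2)))).map (snocEquiv d t) :=
          Measure.map_mono (diagPart_compProd_le_diagPart_map _ (h t)) hsnoc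
      _ = diagPart (pairPathLaw K (t + 1)) := by
          rw [← diagPart_map_prodMap hsnoc (snocEquiv d t).injective, ← pairSnocKernel_comp,
            pairPathLaw_succ]

end PairedPaths

section Representation

variable {d T : ℕ} {μ ν : Measure (Traj d T)} [IsProbabilityMeasure μ] [IsProbabilityMeasure ν]
  {κ η : ∀ t, Kernel (Traj d t) (Fin d → ℝ)} [∀ t, IsMarkovKernel (κ t)]
  [∀ t, IsMarkovKernel (η t)]

lemma exists_mem_BCpl_pathLaw_le_diagPart (hμ : IsDisintegration μ κ)
    (hν : IsDisintegration ν η) :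
    ∃ π ∈ BCpl μ ν, pathLaw (fun t => infKernel (κ t) (η t)) T ≤ diagPart π := by
  -- Only the diagonal values `κ t x ⊓ η t x` of this infimum of kernels on pairs of paths matter.
  choose K _ hfst hsnd hK using fun t => exists_kernel_coupling_le_diagPart
    (infKernel_le_left ((κ t).comap Prod.fst measurable_fst)
      ((η t).comap Prod.snd measurable_snd))
    (infKernel_le_right ((κ t).comap Prod.fst measurable_fst)
      ((η t).comap Prod.snd measurable_snd))
  exact ⟨pairPathLaw K T,
    ⟨⟨inferInstance, (pairPathLaw_map_fst hfst T).trans hμ.eq_pathLaw.symm,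
      (pairPathLaw_map_snd hsnd T).trans hν.eq_pathLaw.symm⟩,
      inferInstance, isBicausal_pairPathLaw hfst hsnd T⟩,
    pathLaw_le_diagPart_pairPathLaw (fun t x => hK t (x, x)) T⟩

lemma diagPart_le_pathLaw_of_mem_BCpl (hμ : IsDisintegration μ κ) (hν : IsDisintegration ν η)
    {π : Measure (Traj d T × Traj d T)} (hπ : π ∈ BCpl μ ν) :
    diagPart π ≤ pathLaw (fun t => infKernel (κ t) (η t)) T := by
  obtain ⟨⟨_, rfl, rfl⟩, _, hbic⟩ := hπ
  calc diagPart π = diagPart (π.map (Prod.map (restr d le_rfl) (restr d le_rfl))) :=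
        congrArg diagPart Measure.map_id.symm
    _ ≤ pathLaw (fun t => infKernel (κ t) (η t)) T := hbic.diagPart_map_restr_le hμ hν le_rfl

lemma isGreatest_diagPart_BCpl (hμ : IsDisintegration μ κ) (hν : IsDisintegration ν η) :
    IsGreatest (diagPart '' BCpl μ ν) (pathLaw (fun t => infKernel (κ t) (η t)) T) := by
  obtain ⟨π, hπ, hle⟩ := exists_mem_BCpl_pathLaw_le_diagPart hμ hν
  refine ⟨⟨π, hπ, (diagPart_le_pathLaw_of_mem_BCpl hμ hν hπ).antisymm hle⟩, ?_⟩
  rintro _ ⟨π, hπ, rfl⟩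
  exact diagPart_le_pathLaw_of_mem_BCpl hμ hν hπ

theorem atv_w_representation_general (hμ : IsDisintegration μ κ) (hν : IsDisintegration ν η)
    {w : Traj d T → ℝ≥0∞} (hw : Measurable w) :
    (⨆ π ∈ BCpl μ ν, ∫⁻ q in {q : Traj d T × Traj d T | q.1 = q.2}, 2 * w q.1 ∂π)
      = 2 * ∫⁻ x, w x ∂(iterComp d (fun t x => κ t x ⊓ η t x) T) ∧
    (⨅ π ∈ BCpl μ ν, ∫⁻ q in {q : Traj d T × Traj d T | q.1 ≠ q.2}, (w q.1 + w q.2) ∂π)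
        + 2 * ∫⁻ x, w x ∂(iterComp d (fun t x => κ t x ⊓ η t x) T)
      = ∫⁻ x, w x ∂μ + ∫⁻ x, w x ∂ν := by
  have hiter : iterComp d (fun t x => κ t x ⊓ η t x) T =
      pathLaw (fun t => infKernel (κ t) (η t)) T :=
    iterComp_eq_pathLaw (fun t => infKernel (κ t) (η t)) T
  have hmax := hiter ▸ isGreatest_diagPart_BCpl hμ hν
  exact ⟨iSup_lintegral_diag_of_isGreatest hmax hw,
    iInf_lintegral_ne_add_of_isGreatest (fun _ hπ => hπ.1) hmax hw⟩

end Representation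

/-- Representation of the weighted adapted total variation: with `η` the
time-step-wise composition of the lattice infima of the conditional kernels of `μ` and `ν`,
the supremum over bicausal couplings of `∫ 2 w(x) 1_{x=y} dπ` equals `2 ∫ w dη` and
`ATV_w(μ,ν) = ∫ w dμ + ∫ w dν - 2 ∫ w dη`. -/
theorem atv_w_representation (d T : ℕ) (hd : 1 ≤ d) (hT : 1 ≤ T)
    (μ ν : Measure (Traj d T)) [IsProbabilityMeasure μ] [IsProbabilityMeasure ν]
    (w : Traj d T → ℝ) (hwm : Measurable w) (hw0 : ∀ x, 0 ≤ w x)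
    (hwint : (∫⁻ x, ENNReal.ofReal (w x) ∂μ) + (∫⁻ x, ENNReal.ofReal (w x) ∂ν) < ⊤)
    -- disintegrations (families of conditional kernels) of `μ` and `ν`
    (κμ κν : ∀ t : ℕ, Traj d t → Measure (Fin d → ℝ))
    (hκμm : ∀ t, Measurable (κμ t)) (hκνm : ∀ t, Measurable (κν t))
    (hκμp : ∀ t x, IsProbabilityMeasure (κμ t x)) (hκνp : ∀ t x, IsProbabilityMeasure (κν t x))
    (hκμdis : ∀ t, ∀ h : t + 1 ≤ T,
      μ.map (restr d h) =
        (μ.map (restr d (Nat.le_of_succ_le h))).bind (fun x => (κμ t x).map (Fin.snoc x)))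
    (hκνdis : ∀ t, ∀ h : t + 1 ≤ T,
      ν.map (restr d h) =
        (ν.map (restr d (Nat.le_of_succ_le h))).bind (fun x => (κν t x).map (Fin.snoc x)))
    -- the lattice infima of the kernels form measurable (sub-probability) kernels
    (hinfm : ∀ t, Measurable (fun x => κμ t x ⊓ κν t x)) :
    (⨆ π ∈ BCpl μ ν, ∫⁻ q in {q : Traj d T × Traj d T | q.1 = q.2},
        2 * ENNReal.ofReal (w q.1) ∂π)
      = 2 * ∫⁻ x, ENNReal.ofReal (w x) ∂(iterComp d (fun t x => κμ t x ⊓ κν t x) T) ∧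
    ATVw w μ ν =
      (∫⁻ x, ENNReal.ofReal (w x) ∂μ) + (∫⁻ x, ENNReal.ofReal (w x) ∂ν)
        - 2 * ∫⁻ x, ENNReal.ofReal (w x) ∂(iterComp d (fun t x => κμ t x ⊓ κν t x) T) := by
  have (t : ℕ) : IsMarkovKernel (⟨κμ t, hκμm t⟩ : Kernel _ _) := ⟨hκμp t⟩
  have (t : ℕ) : IsMarkovKernel (⟨κν t, hκνm t⟩ : Kernel _ _) := ⟨hκνp t⟩
  obtain ⟨hsup, hATV⟩ := atv_w_representation_general (κ := fun t => ⟨κμ t, hκμm t⟩)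
    (η := fun t => ⟨κν t, hκνm t⟩) hκμdis hκνdis hwm.ennreal_ofReal
  exact ⟨hsup, ENNReal.eq_sub_of_add_eq' hwint.ne hATV⟩

end
end

section
/- Let a, b, c, l, λ, κ ∈ [0, ∞) with b > 0, a ≤ min(1, b) and λ ≥ κ. Consider the infimum of ∫ H(u, y) dρ(u, y) over all Borel probability measures ρ on [0, ∞) × [0, ∞) satisfying ∫ y dρ(u, y) = 1 and ∫ u dρ(u, y) ≤ c·l. This infimum equals l · (|1 − b|(λ − κ) + 2κ(b + c)(a − 1)) if b ≤ 1, and equals l · (|1 − b|(λ − κ) + 2κ(1 + c)(a/b − 1)) if b ≥ 1. -/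
open MeasureTheory
open scoped ENNReal

noncomputable section

/-- The integrand `H(u,y) = (l+u)((λ-κ)|1-by| + 2κ(a min(1,y) - min(1,by)))`. -/
def Hfun (l lam kap a b : ℝ) (u y : ℝ) : ℝ :=
  (l + u) * ((lam - kap) * |1 - b * y| + 2 * kap * (a * min 1 y - min 1 (b * y)))

/-- The integral `∫ H dρ`, well-defined with values in `(-∞, ∞]` as the difference of the
integrals of the positive and negative parts. -/
def intH (l lam kap a b : ℝ) (ρ : Measure (ℝ × ℝ)) : EReal :=
  ((∫⁻ q, ENNReal.ofReal (Hfun l lam kap a b q.1 q.2) ∂ρ : ℝ≥0∞) : EReal)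
    - ((∫⁻ q, ENNReal.ofReal (-(Hfun l lam kap a b q.1 q.2)) ∂ρ : ℝ≥0∞) : EReal)

/-- The admissible distributions `ρ` of the pair `(ΔW, Y)` of nonnegative random variables with
`E[Y] = 1` and `E[ΔW] ≤ c l`. -/
def Adm (c l : ℝ) : Set (Measure (ℝ × ℝ)) :=
  {ρ | IsProbabilityMeasure ρ ∧ (∀ᵐ q ∂ρ, 0 ≤ q.1 ∧ 0 ≤ q.2) ∧
    (∫⁻ q, ENNReal.ofReal q.2 ∂ρ) = 1 ∧ (∫⁻ q, ENNReal.ofReal q.1 ∂ρ) ≤ ENNReal.ofReal (c * l)}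

/-!
Write `H(u, y) = (l + u) φ(y)` and `θ = a / max 1 b - 1 ≤ 0`. Since
`min 1 (b y) ≤ max 1 b * min 1 y`, we have `φ(y) ≥ (λ - κ) |1 - b y| + 2 κ θ min(1, b y) ≥ 2 κ θ`.
Using the first bound against `l`, the second against `u`, and Jensen's inequality for `|1 - b Y|`
and `min(1, b Y)` gives `∫ H dρ ≥ l (|1 - b| (λ - κ) + 2 κ (min 1 b + c) θ)`.

Conversely, let `ΔW` be nonzero only on `{Y = 1 / b}`, where `φ` takes its minimum `2 κ θ`. For
`b ≤ 1` the bound is attained with `Y ∈ {1 / b, 0}`; for `b > 1` it is approached by moving a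
vanishing mass of `Y` from `1 / b` to infinity.
-/

open Filter ProbabilityTheory Topology
open scoped unitInterval

section ExtendedIntegral

variable {α : Type*} [MeasurableSpace α] {μ : Measure α} {f g : α → ℝ}

/-- The integral of `f` in the extended reals, as the difference of the integrals of its positive
and negative parts. It is meaningful only when the negative part has finite integral: in `EReal`,
`⊤ - ⊤ = ⊥`. -/
def extIntegral (f : α → ℝ) (μ : Measure α) : EReal :=
  ((∫⁻ x, ENNReal.ofReal (f x) ∂μ : ℝ≥0∞) : EReal)
    - ((∫⁻ x, ENNReal.ofReal (-f x) ∂μ : ℝ≥0∞) : EReal)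

lemma extIntegral_eq_integral (hf : Integrable f μ) :
    extIntegral f μ = ((∫ x, f x ∂μ : ℝ) : EReal) := by
  have hneg : ∫⁻ x, ENNReal.ofReal (-f x) ∂μ ≠ ⊤ := hf.neg.lintegral_lt_top.ne
  rw [integral_eq_lintegral_pos_part_sub_lintegral_neg_part hf, extIntegral, EReal.coe_sub,
    EReal.coe_ennreal_toReal hf.lintegral_lt_top.ne, EReal.coe_ennreal_toReal hneg]

lemma extIntegral_eq_top_of_not_integrable (hf : AEStronglyMeasurable f μ) (hg : Integrable g μ)
    (hgf : g ≤ᵐ[μ] f) (hfi : ¬ Integrable f μ) : extIntegral f μ = ⊤ := by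
  have hpos : ∫⁻ x, ENNReal.ofReal (f x) ∂μ = ⊤ := by
    by_contra hfin
    have hmax_fin : ∫⁻ x, ENNReal.ofReal (max (f x) 0) ∂μ ≠ ⊤ := by simpa using hfin
    have hmax : Integrable (fun x => max (f x) 0) μ :=
      (lintegral_ofReal_ne_top_iff_integrable (hf.sup aestronglyMeasurable_const)
        (ae_of_all _ fun x => le_max_right _ _)).1 hmax_fin
    exact hfi (integrable_of_le_of_le hf hgf (ae_of_all _ fun x => le_max_left _ _) hg hmax)
  have hneg : ∫⁻ x, ENNReal.ofReal (-f x) ∂μ ≠ ⊤ :=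
    ne_top_of_le_ne_top hg.neg.lintegral_lt_top.ne <| lintegral_mono_ae <|
      hgf.mono fun x hx => ENNReal.ofReal_le_ofReal (neg_le_neg hx)
  rw [extIntegral, hpos, EReal.coe_ennreal_top, EReal.top_sub]
  exact mt EReal.coe_ennreal_eq_top_iff.1 hneg

lemma integral_le_extIntegral (hf : AEStronglyMeasurable f μ) (hg : Integrable g μ)
    (hgf : g ≤ᵐ[μ] f) : ((∫ x, g x ∂μ : ℝ) : EReal) ≤ extIntegral f μ := by
  by_cases hfi : Integrable f μ
  · rw [extIntegral_eq_integral hfi]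
    exact_mod_cast integral_mono_ae hg hfi hgf
  · rw [extIntegral_eq_top_of_not_integrable hf hg hgf hfi]
    exact le_top

end ExtendedIntegral

section Jensen

variable {Ω : Type*} [MeasurableSpace Ω] {μ : Measure Ω} {X Y : Ω → ℝ}

lemma integral_min_le (hX : Integrable X μ) (hY : Integrable Y μ) :
    ∫ ω, min (X ω) (Y ω) ∂μ ≤ min (∫ ω, X ω ∂μ) (∫ ω, Y ω ∂μ) :=
  le_min (integral_mono (hX.inf hY) hX fun _ => min_le_left _ _)
    (integral_mono (hX.inf hY) hY fun _ => min_le_right _ _)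

variable [IsProbabilityMeasure μ]

lemma integral_min_const_mul_le (k b : ℝ) (hX : Integrable X μ) :
    ∫ ω, min k (b * X ω) ∂μ ≤ min k (b * ∫ ω, X ω ∂μ) := by
  simpa [integral_const_mul] using integral_min_le (integrable_const k) (hX.const_mul b)

lemma abs_const_sub_mul_integral_le (k b : ℝ) (hX : Integrable X μ) :
    |k - b * ∫ ω, X ω ∂μ| ≤ ∫ ω, |k - b * X ω| ∂μ := by
  have h : ∫ ω, (k - b * X ω) ∂μ = k - b * ∫ ω, X ω ∂μ := by
    rw [integral_sub (integrable_const k) (hX.const_mul b), integral_const_mul]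
    simp
  rw [← h]
  exact abs_integral_le_integral_abs

end Jensen

section Admissible

variable {c l γ : ℝ} {ρ : Measure (ℝ × ℝ)} {φ g : ℝ → ℝ}

lemma mem_adm_iff (hcl : 0 ≤ c * l) :
    ρ ∈ Adm c l ↔ IsProbabilityMeasure ρ ∧ (∀ᵐ q ∂ρ, 0 ≤ q.1 ∧ 0 ≤ q.2) ∧
      (Integrable Prod.snd ρ ∧ ∫ q, q.2 ∂ρ = 1) ∧
      (Integrable Prod.fst ρ ∧ ∫ q, q.1 ∂ρ ≤ c * l) := by
  refine and_congr_right fun _ => and_congr_right fun h0 => ?_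
  have hfst : 0 ≤ᵐ[ρ] Prod.fst := h0.mono fun q hq => hq.1
  have hsnd : 0 ≤ᵐ[ρ] Prod.snd := h0.mono fun q hq => hq.2
  constructor
  · rintro ⟨hy, hu⟩
    have hyi : Integrable Prod.snd ρ :=
      (lintegral_ofReal_ne_top_iff_integrable measurable_snd.aestronglyMeasurable hsnd).1
        (hy ▸ ENNReal.one_ne_top)
    have hui : Integrable Prod.fst ρ :=
      (lintegral_ofReal_ne_top_iff_integrable measurable_fst.aestronglyMeasurable hfst).1
        (ne_top_of_le_ne_top ENNReal.ofReal_ne_top hu)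
    rw [← ofReal_integral_eq_lintegral_ofReal hyi hsnd, ENNReal.ofReal_eq_one] at hy
    rw [← ofReal_integral_eq_lintegral_ofReal hui hfst, ENNReal.ofReal_le_ofReal_iff hcl] at hu
    exact ⟨⟨hyi, hy⟩, hui, hu⟩
  · rintro ⟨⟨hyi, hy⟩, hui, hu⟩
    rw [← ofReal_integral_eq_lintegral_ofReal hyi hsnd,
      ← ofReal_integral_eq_lintegral_ofReal hui hfst]
    exact ⟨ENNReal.ofReal_eq_one.2 hy, ENNReal.ofReal_le_ofReal hu⟩

lemma le_extIntegral_of_mem_adm (hc : 0 ≤ c) (hl : 0 ≤ l) (hρ : ρ ∈ Adm c l) (hφ : Measurable φ)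
    (hg : Integrable (fun q => g q.2) ρ) (hgφ : ∀ y, 0 ≤ y → g y ≤ φ y)
    (hγφ : ∀ y, 0 ≤ y → γ ≤ φ y) (hγ : γ ≤ 0) :
    ((l * ∫ q, g q.2 ∂ρ + c * l * γ : ℝ) : EReal) ≤
      extIntegral (fun q => (l + q.1) * φ q.2) ρ := by
  obtain ⟨-, h0, -, hui, hu⟩ := (mem_adm_iff (mul_nonneg hc hl)).1 hρ
  have hminorant : Integrable (fun q => l * g q.2 + q.1 * γ) ρ :=
    (hg.const_mul l).add (hui.mul_const γ)
  refine le_trans ?_ (integral_le_extIntegral (by fun_prop) hminorant ?_)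
  · rw [integral_add (hg.const_mul l) (hui.mul_const γ), integral_const_mul, integral_mul_const,
      EReal.coe_le_coe_iff]
    exact add_le_add le_rfl (mul_le_mul_of_nonpos_right hu hγ)
  · filter_upwards [h0] with q hq
    rw [add_mul]
    exact add_le_add (mul_le_mul_of_nonneg_left (hgφ _ hq.2) hl)
      (mul_le_mul_of_nonneg_left (hγφ _ hq.2) hq.1)

/-- Upper bound from the law with mass `p` at `(c l / p, y₀)` and mass `1 - p` at `(0, y₁)`. -/
lemma iInf_extIntegral_le_two_point (hc : 0 ≤ c) (hl : 0 ≤ l) {p : I} (hp : 0 < (p : ℝ))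
    {y₀ y₁ : ℝ} (hy₀ : 0 ≤ y₀) (hy₁ : 0 ≤ y₁) (hmean : p * y₀ + (1 - p) * y₁ = 1) :
    ⨅ ρ ∈ Adm c l, extIntegral (fun q => (l + q.1) * φ q.2) ρ ≤
      ((l * (p * φ y₀ + (1 - p) * φ y₁) + c * l * φ y₀ : ℝ) : EReal) := by
  have hcl : 0 ≤ c * l := mul_nonneg hc hl
  set ρ : Measure (ℝ × ℝ) := Ber((c * l / p, y₀), (0, y₁), p) with hρ
  have hint (f : ℝ × ℝ → ℝ) : Integrable f ρ := integrable_bernoulliMeasure _ _ _ f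
  have hadm : ρ ∈ Adm c l := by
    refine (mem_adm_iff hcl).2 ⟨inferInstance, ?_, ⟨hint _, ?_⟩, hint _, ?_⟩
    · rw [hρ, bernoulliMeasure_def, ae_add_measure_iff]
      refine ⟨Measure.ae_smul_measure ?_ _, Measure.ae_smul_measure ?_ _⟩ <;> rw [ae_dirac_eq]
      exacts [⟨by positivity, hy₀⟩, ⟨le_rfl, hy₁⟩]
    · rw [hρ, integral_bernoulliMeasure]
      exact hmean
    · rw [hρ, integral_bernoulliMeasure, smul_eq_mul, smul_zero, add_zero, mul_div_cancel₀ _ hp.ne']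
  refine (iInf₂_le ρ hadm).trans_eq ?_
  rw [extIntegral_eq_integral (hint _), hρ, integral_bernoulliMeasure, smul_eq_mul, smul_eq_mul]
  congr 1
  field_simp
  ring

end Admissible

/-- The slope of `H(u, y)` in `u`, so that `H(u, y) = (l + u) * slopeH y`. -/
def slopeH (lam kap a b y : ℝ) : ℝ :=
  (lam - kap) * |1 - b * y| + 2 * kap * (a * min 1 y - min 1 (b * y))

section Slope

variable {lam kap a b y : ℝ}

lemma intH_eq_extIntegral (l lam kap a b : ℝ) (ρ : Measure (ℝ × ℝ)) :
    intH l lam kap a b ρ = extIntegral (fun q => (l + q.1) * slopeH lam kap a b q.2) ρ :=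
  rfl

lemma measurable_slopeH (lam kap a b : ℝ) : Measurable (slopeH lam kap a b) := by
  unfold slopeH
  fun_prop

lemma min_one_mul_le_max_mul_min (b : ℝ) (hy : 0 ≤ y) :
    min 1 (b * y) ≤ max 1 b * min 1 y := by
  rw [mul_min_of_nonneg _ _ (zero_le_one.trans (le_max_left 1 b)), mul_one]
  exact min_le_min (le_max_left 1 b) (mul_le_mul_of_nonneg_right (le_max_right 1 b) hy)

lemma mul_min_le_mul_min_sub_min (b : ℝ) (ha : 0 ≤ a) (hy : 0 ≤ y) :
    (a / max 1 b - 1) * min 1 (b * y) ≤ a * min 1 y - min 1 (b * y) := by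
  have hmax : 0 < max 1 b := zero_lt_one.trans_le (le_max_left 1 b)
  have h : a / max 1 b * min 1 (b * y) ≤ a * min 1 y := by
    rw [div_mul_eq_mul_div, div_le_iff₀ hmax, mul_assoc, mul_comm (min 1 y)]
    exact mul_le_mul_of_nonneg_left (min_one_mul_le_max_mul_min b hy) ha
  linarith

lemma le_slopeH (b : ℝ) (ha : 0 ≤ a) (hkap : 0 ≤ kap) (hy : 0 ≤ y) :
    (lam - kap) * |1 - b * y| + 2 * kap * (a / max 1 b - 1) * min 1 (b * y) ≤
      slopeH lam kap a b y := by
  rw [slopeH, mul_assoc (2 * kap)]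
  gcongr
  exact mul_min_le_mul_min_sub_min b ha hy

lemma div_max_sub_one_nonpos (hab : a ≤ max 1 b) : a / max 1 b - 1 ≤ 0 :=
  sub_nonpos.2 (div_le_one_of_le₀ hab (zero_le_one.trans (le_max_left 1 b)))

lemma const_le_slopeH (ha : 0 ≤ a) (hkap : 0 ≤ kap) (hab : a ≤ max 1 b) (hlk : kap ≤ lam)
    (hy : 0 ≤ y) : 2 * kap * (a / max 1 b - 1) ≤ slopeH lam kap a b y := by
  have hθ : 2 * kap * (a / max 1 b - 1) ≤ 0 :=
    mul_nonpos_of_nonneg_of_nonpos (by positivity) (div_max_sub_one_nonpos hab)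
  calc 2 * kap * (a / max 1 b - 1)
      ≤ 2 * kap * (a / max 1 b - 1) * min 1 (b * y) :=
        le_mul_of_le_one_right hθ (min_le_left _ _)
    _ ≤ (lam - kap) * |1 - b * y| + 2 * kap * (a / max 1 b - 1) * min 1 (b * y) :=
        le_add_of_nonneg_left (mul_nonneg (sub_nonneg.2 hlk) (abs_nonneg _))
    _ ≤ slopeH lam kap a b y := le_slopeH b ha hkap hy

lemma slopeH_zero (lam kap a b : ℝ) : slopeH lam kap a b 0 = lam - kap := by
  simp [slopeH]

lemma slopeH_inv (hb : 0 < b) : slopeH lam kap a b b⁻¹ = 2 * kap * (a / max 1 b - 1) := by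
  have hmin : min 1 b⁻¹ = (max 1 b)⁻¹ := by
    rcases le_total 1 b with h | h
    · rw [min_eq_right (inv_le_one_of_one_le₀ h), max_eq_right h]
    · rw [min_eq_left ((one_le_inv₀ hb).2 h), max_eq_left h, inv_one]
  rw [slopeH, mul_inv_cancel₀ hb.ne', hmin, ← div_eq_mul_inv]
  simp

lemma slopeH_of_one_le (hb : 1 ≤ b) (hy : 1 ≤ y) :
    slopeH lam kap a b y = (lam - kap) * (b * y - 1) + 2 * kap * (a - 1) := by
  have hby : 1 ≤ b * y := one_le_mul_of_one_le_of_one_le hb hy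
  rw [slopeH, min_eq_left hy, min_eq_left hby, mul_one, abs_sub_comm,
    abs_of_nonneg (sub_nonneg.2 hby)]

end Slope

section Value

variable {a b c l lam kap : ℝ}

lemma le_intH_of_mem_adm {ρ : Measure (ℝ × ℝ)} (ha : 0 ≤ a) (hc : 0 ≤ c) (hl : 0 ≤ l)
    (hkap : 0 ≤ kap) (hab : a ≤ max 1 b) (hlk : kap ≤ lam) (hρ : ρ ∈ Adm c l) :
    ((l * (|1 - b| * (lam - kap) + 2 * kap * (min 1 b + c) * (a / max 1 b - 1)) : ℝ) : EReal) ≤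
      intH l lam kap a b ρ := by
  obtain ⟨_, -, ⟨hyi, hy⟩, -⟩ := (mem_adm_iff (mul_nonneg hc hl)).1 hρ
  have hγ : 2 * kap * (a / max 1 b - 1) ≤ 0 :=
    mul_nonpos_of_nonneg_of_nonpos (by positivity) (div_max_sub_one_nonpos hab)
  set γ : ℝ := 2 * kap * (a / max 1 b - 1) with hγ_def
  have habs : Integrable (fun q => (lam - kap) * |1 - b * q.2|) ρ :=
    (((integrable_const 1).sub (hyi.const_mul b)).abs).const_mul _
  have hmin : Integrable (fun q => γ * min 1 (b * q.2)) ρ :=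
    ((integrable_const 1).inf (hyi.const_mul b)).const_mul _
  have hJensen : (lam - kap) * |1 - b| + γ * min 1 b ≤
      ∫ q, ((lam - kap) * |1 - b * q.2| + γ * min 1 (b * q.2)) ∂ρ := by
    have habs_le := abs_const_sub_mul_integral_le 1 b hyi
    have hmin_le := integral_min_const_mul_le 1 b hyi
    rw [hy, mul_one] at habs_le hmin_le
    rw [integral_add habs hmin, integral_const_mul, integral_const_mul]
    exact add_le_add (mul_le_mul_of_nonneg_left habs_le (sub_nonneg.2 hlk))
      (mul_le_mul_of_nonpos_left hmin_le hγ)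
  rw [intH_eq_extIntegral]
  refine le_trans ?_ (le_extIntegral_of_mem_adm hc hl hρ (measurable_slopeH lam kap a b)
    (habs.add hmin) (fun y => le_slopeH b ha hkap)
    (fun y => const_le_slopeH ha hkap hab hlk) hγ)
  rw [EReal.coe_le_coe_iff]
  calc l * (|1 - b| * (lam - kap) + 2 * kap * (min 1 b + c) * (a / max 1 b - 1))
      = l * ((lam - kap) * |1 - b| + γ * min 1 b) + c * l * γ := by rw [hγ_def]; ring
    _ ≤ _ := add_le_add (mul_le_mul_of_nonneg_left hJensen hl) le_rfl

lemma iInf_intH_le_of_le_one (hb : 0 < b) (hb1 : b ≤ 1) (hc : 0 ≤ c) (hl : 0 ≤ l) :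
    ⨅ ρ ∈ Adm c l, intH l lam kap a b ρ ≤
      ((l * (|1 - b| * (lam - kap) + 2 * kap * (b + c) * (a - 1)) : ℝ) : EReal) := by
  simp only [intH_eq_extIntegral]
  refine (iInf_extIntegral_le_two_point hc hl (p := ⟨b, hb.le, hb1⟩) hb (inv_nonneg.2 hb.le)
    le_rfl (by simp [hb.ne'])).trans_eq ?_
  rw [slopeH_inv hb, slopeH_zero, max_eq_left hb1, div_one, abs_of_nonneg (sub_nonneg.2 hb1)]
  congr 1
  ring

lemma iInf_intH_le_add_mul (hb : 1 ≤ b) (hc : 0 ≤ c) (hl : 0 ≤ l) {ε : ℝ} (hε : 0 < ε)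
    (hε1 : ε < 1) :
    ⨅ ρ ∈ Adm c l, intH l lam kap a b ρ ≤
      ((l * (|1 - b| * (lam - kap) + 2 * kap * (1 + c) * (a / b - 1)) +
        ε * (2 * kap * l * (a - a / b)) : ℝ) : EReal) := by
  have hb0 : 0 < b := zero_lt_one.trans_le hb
  -- The far atom is placed so that the mean of `Y` is `1`.
  set y : ℝ := b⁻¹ + (1 - b⁻¹) / ε with hy_def
  have hy : 1 ≤ y := by
    have h : 1 - b⁻¹ ≤ (1 - b⁻¹) / ε :=
      le_div_self (sub_nonneg.2 (inv_le_one_of_one_le₀ hb)) hε hε1.le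
    linarith
  have hεy : ε * (b * y - 1) = b - 1 := by
    rw [hy_def]
    field_simp
    ring
  have hmean : (1 - ε) * b⁻¹ + (1 - (1 - ε)) * y = 1 := by
    rw [hy_def]
    field_simp
    ring
  simp only [intH_eq_extIntegral]
  refine (iInf_extIntegral_le_two_point hc hl (p := ⟨1 - ε, by linarith, by linarith⟩)
    (sub_pos.2 hε1) (inv_nonneg.2 hb0.le) (zero_le_one.trans hy) hmean).trans_eq ?_
  rw [slopeH_inv hb0, slopeH_of_one_le hb hy, max_eq_right hb, abs_sub_comm,
    abs_of_nonneg (sub_nonneg.2 hb)]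
  congr 1
  linear_combination l * (lam - kap) * hεy

lemma iInf_intH_le_of_one_le (hb : 1 ≤ b) (hc : 0 ≤ c) (hl : 0 ≤ l) :
    ⨅ ρ ∈ Adm c l, intH l lam kap a b ρ ≤
      ((l * (|1 - b| * (lam - kap) + 2 * kap * (1 + c) * (a / b - 1)) : ℝ) : EReal) := by
  set v : ℝ := l * (|1 - b| * (lam - kap) + 2 * kap * (1 + c) * (a / b - 1))
  have hcont : Continuous fun ε : ℝ => ((v + ε * (2 * kap * l * (a - a / b)) : ℝ) : EReal) :=
    continuous_coe_real_ereal.comp (by fun_prop)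
  have hlim : Tendsto (fun ε : ℝ => ((v + ε * (2 * kap * l * (a - a / b)) : ℝ) : EReal))
      (𝓝[>] 0) (𝓝 v) := by
    simpa using (hcont.tendsto 0).mono_left nhdsWithin_le_nhds
  refine ge_of_tendsto hlim ?_
  filter_upwards [Ioo_mem_nhdsGT zero_lt_one] with ε hε
  exact iInf_intH_le_add_mul hb hc hl hε.1 hε.2

theorem intH_min_general (ha : 0 ≤ a) (hb : 0 < b) (hc : 0 ≤ c) (hl : 0 ≤ l) (hkap : 0 ≤ kap)
    (hab : a ≤ max 1 b) (hlk : kap ≤ lam) :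
    ⨅ ρ ∈ Adm c l, intH l lam kap a b ρ =
      ((l * (|1 - b| * (lam - kap) + 2 * kap * (min 1 b + c) * (a / max 1 b - 1)) : ℝ) :
        EReal) := by
  refine le_antisymm ?_ (le_iInf₂ fun ρ => le_intH_of_mem_adm ha hc hl hkap hab hlk)
  rcases le_total b 1 with hb1 | hb1
  · rw [min_eq_right hb1, max_eq_left hb1, div_one]
    exact iInf_intH_le_of_le_one hb hb1 hc hl
  · rw [min_eq_left hb1, max_eq_right hb1]
    exact iInf_intH_le_of_one_le hb1 hc hl

end Value

/-- The value of the auxiliary minimization problem: for `b > 0`,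
`a ≤ min(1,b)`, `λ ≥ κ`, the infimum of `∫ H dρ` over admissible `ρ` equals
`l(|1-b|(λ-κ) + 2κ(b+c)(a-1))` if `b ≤ 1`, and `l(|1-b|(λ-κ) + 2κ(1+c)(a/b-1))` if `b ≥ 1`. -/
theorem intH_min (a b c l lam kap : ℝ)
    (ha0 : 0 ≤ a) (hb0 : 0 < b) (hc0 : 0 ≤ c) (hl0 : 0 ≤ l) (hlam0 : 0 ≤ lam) (hkap0 : 0 ≤ kap)
    (hab : a ≤ min 1 b) (hlk : kap ≤ lam) :
    (⨅ ρ ∈ Adm c l, intH l lam kap a b ρ) =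
      ((l * (|1 - b| * (lam - kap) +
          (if b ≤ 1 then 2 * kap * (b + c) * (a - 1) else 2 * kap * (1 + c) * (a / b - 1))) : ℝ)
        : EReal) := by
  rw [intH_min_general ha0 hb0 hc0 hl0 hkap0 (hab.trans min_le_max) hlk]
  split_ifs with hb
  · rw [min_eq_right hb, max_eq_left hb, div_one]
  · rw [min_eq_left (not_le.1 hb).le, max_eq_right (not_le.1 hb).le]

end
end

section
/- Let a, b, c, l, λ, κ ∈ [0, ∞) with a ≤ min(1, b) and λ ≥ κ. Then for every Borel probability measure ρ on [0, ∞) × [0, ∞) satisfying ∫ y dρ(u, y) = 1 and ∫ u dρ(u, y) ≤ c·l, one has ∫ H(u, y) dρ(u, y) ≥ l · (|1 − b|(λ − κ − 2κ(c + 1)) + 2κ(c + 1)(a − min(b, 1))). -/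
open MeasureTheory
open scoped ENNReal

noncomputable section

/-!
Since `min 1 (b * y) - a * min 1 y` never exceeds `max 1 b - a`, the integrand dominates
`l (λ - κ) |1 - b y| - 2 κ (max 1 b - a) (l + u)`, which is integrable although `H` need not be.
Jensen's inequality `E|1 - b Y| ≥ |1 - b E[Y]|` bounds the integral of the first term, the
constraint on `E[ΔW]` that of the second, and `max 1 b = min b 1 + |1 - b|` turns the sum into the
stated bound.
-/

theorem coe_integral_le_lintegral_sub_lintegral {α : Type*} [MeasurableSpace α] {μ : Measure α}
    {g h : α → ℝ} (hg : Integrable g μ) (hgh : ∀ᵐ x ∂μ, g x ≤ h x) :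
    ((∫ x, g x ∂μ : ℝ) : EReal) ≤
      ((∫⁻ x, ENNReal.ofReal (h x) ∂μ : ℝ≥0∞) : EReal)
        - ((∫⁻ x, ENNReal.ofReal (-(h x)) ∂μ : ℝ≥0∞) : EReal) := by
  have hneg : ∫⁻ x, ENNReal.ofReal (-(g x)) ∂μ ≠ ∞ := hg.neg.lintegral_lt_top.ne
  rw [integral_eq_lintegral_pos_part_sub_lintegral_neg_part hg, EReal.coe_sub,
    EReal.coe_ennreal_toReal hg.lintegral_lt_top.ne, EReal.coe_ennreal_toReal hneg]
  refine EReal.sub_le_sub ?positive ?negative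
  case positive =>
    exact EReal.coe_ennreal_le_coe_ennreal_iff.2 <| lintegral_mono_ae <|
      hgh.mono fun _ hx => ENNReal.ofReal_le_ofReal hx
  case negative =>
    exact EReal.coe_ennreal_le_coe_ennreal_iff.2 <| lintegral_mono_ae <|
      hgh.mono fun _ hx => ENNReal.ofReal_le_ofReal (neg_le_neg hx)

theorem norm_sub_integral_le_integral_norm_sub {α E : Type*} [MeasurableSpace α]
    [NormedAddCommGroup E] [NormedSpace ℝ E] [CompleteSpace E] {μ : Measure α}
    [IsProbabilityMeasure μ] {f : α → E} (hf : Integrable f μ) (v : E) :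
    ‖v - ∫ x, f x ∂μ‖ ≤ ∫ x, ‖v - f x‖ ∂μ :=
  calc ‖v - ∫ x, f x ∂μ‖ = ‖∫ x, (v - f x) ∂μ‖ := by
        rw [integral_sub (integrable_const v) hf, integral_const, probReal_univ, one_smul]
    _ ≤ ∫ x, ‖v - f x‖ ∂μ := norm_integral_le_integral_norm _

theorem sub_max_le_mul_min_sub_min {R : Type*} [CommRing R] [LinearOrder R]
    [IsStrictOrderedRing R] {a b : R} (hab : a ≤ b) (y : R) :
    a - max 1 b ≤ a * min 1 y - min 1 (b * y) := by
  rcases le_total 1 y with hy | hy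
  · rw [min_eq_left hy]
    linarith [min_le_left 1 (b * y), le_max_left 1 b]
  · rw [min_eq_right hy]
    have hmul : (b - a) * y ≤ b - a := mul_le_of_le_one_right (sub_nonneg.2 hab) hy
    linarith [min_le_right 1 (b * y), le_max_right 1 b]

section Adm

variable {c l : ℝ} {ρ : Measure (ℝ × ℝ)}

theorem integrable_fst_of_mem_adm (hρ : ρ ∈ Adm c l) : Integrable (fun q : ℝ × ℝ => q.1) ρ :=
  have ⟨_, hnonneg, _, hW⟩ := hρ
  (lintegral_ofReal_ne_top_iff_integrable measurable_fst.aestronglyMeasurable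
    (hnonneg.mono fun _ hq => hq.1)).1 (ne_top_of_le_ne_top ENNReal.ofReal_ne_top hW)

theorem integral_fst_le_of_mem_adm (hcl : 0 ≤ c * l) (hρ : ρ ∈ Adm c l) :
    ∫ q, q.1 ∂ρ ≤ c * l := by
  obtain ⟨_, hnonneg, _, hW⟩ := hρ
  rw [integral_eq_lintegral_of_nonneg_ae (hnonneg.mono fun _ hq => hq.1)
    measurable_fst.aestronglyMeasurable]
  exact ENNReal.toReal_le_of_le_ofReal hcl hW

theorem integral_snd_of_mem_adm (hρ : ρ ∈ Adm c l) : ∫ q, q.2 ∂ρ = 1 := by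
  obtain ⟨_, hnonneg, hY, _⟩ := hρ
  rw [integral_eq_lintegral_of_nonneg_ae (hnonneg.mono fun _ hq => hq.2)
    measurable_snd.aestronglyMeasurable, hY, ENNReal.toReal_one]

end Adm

section LowerBound

variable {a b l lam kap : ℝ}

theorem abs_add_affine_le_Hfun (hl : 0 ≤ l) (hkap : 0 ≤ kap) (hab : a ≤ b)
    (hlk : kap ≤ lam) {u : ℝ} (hu : 0 ≤ u) (y : ℝ) :
    l * (lam - kap) * |1 - b * y| + 2 * kap * (a - max 1 b) * (l + u)
      ≤ Hfun l lam kap a b u y := by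
  have habs : l * ((lam - kap) * |1 - b * y|) ≤ (l + u) * ((lam - kap) * |1 - b * y|) :=
    mul_le_mul_of_nonneg_right (le_add_of_nonneg_right hu)
      (mul_nonneg (sub_nonneg.2 hlk) (abs_nonneg _))
  have hmin : 2 * kap * (l + u) * (a - max 1 b)
      ≤ 2 * kap * (l + u) * (a * min 1 y - min 1 (b * y)) :=
    mul_le_mul_of_nonneg_left (sub_max_le_mul_min_sub_min hab y) (by positivity)
  unfold Hfun
  linarith

theorem intH_lower_bound_general {c : ℝ} (hl : 0 ≤ l) (hkap : 0 ≤ kap) (hab : a ≤ b)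
    (hlk : kap ≤ lam) {ρ : Measure (ℝ × ℝ)} [IsProbabilityMeasure ρ]
    (hu_nonneg : ∀ᵐ q ∂ρ, 0 ≤ q.1) (hu : Integrable (fun q : ℝ × ℝ => q.1) ρ)
    (hEu : ∫ q, q.1 ∂ρ ≤ c * l) (hEy : ∫ q, q.2 ∂ρ = 1) :
    ((l * (|1 - b| * (lam - kap - 2 * kap * (c + 1)) +
        2 * kap * (c + 1) * (a - min b 1)) : ℝ) : EReal) ≤ intH l lam kap a b ρ := by
  have hy : Integrable (fun q : ℝ × ℝ => q.2) ρ := .of_integral_ne_zero (by simp [hEy])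
  have habs : Integrable (fun q : ℝ × ℝ => l * (lam - kap) * |1 - b * q.2|) ρ :=
    ((integrable_const 1).sub (hy.const_mul b)).abs.const_mul _
  have haff : Integrable (fun q : ℝ × ℝ => 2 * kap * (a - max 1 b) * (l + q.1)) ρ :=
    ((integrable_const l).add hu).const_mul _
  have hjensen : |1 - b| ≤ ∫ q, |1 - b * q.2| ∂ρ := by
    simpa only [Real.norm_eq_abs, integral_const_mul, hEy, mul_one] using
      norm_sub_integral_le_integral_norm_sub (hy.const_mul b) 1
  have hcoef : 2 * kap * (a - max 1 b) ≤ 0 :=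
    mul_nonpos_of_nonneg_of_nonpos (by positivity)
      (sub_nonpos.2 (hab.trans (le_max_right 1 b)))
  have hmax : max 1 b = min b 1 + |1 - b| := by
    rw [← max_sub_min_eq_abs', min_comm b 1, add_sub_cancel]
  refine (EReal.coe_le_coe_iff.2 ?_).trans (coe_integral_le_lintegral_sub_lintegral
    (habs.add haff) (hu_nonneg.mono fun q hq => abs_add_affine_le_Hfun hl hkap hab hlk hq q.2))
  calc l * (|1 - b| * (lam - kap - 2 * kap * (c + 1)) + 2 * kap * (c + 1) * (a - min b 1))
      = l * (lam - kap) * |1 - b| + 2 * kap * (a - max 1 b) * (l + c * l) := by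
        rw [hmax]; ring
    _ ≤ l * (lam - kap) * ∫ q, |1 - b * q.2| ∂ρ
          + 2 * kap * (a - max 1 b) * (l + ∫ q, q.1 ∂ρ) :=
        add_le_add (mul_le_mul_of_nonneg_left hjensen (mul_nonneg hl (sub_nonneg.2 hlk)))
          (mul_le_mul_of_nonpos_left (add_le_add_right hEu l) hcoef)
    _ = ∫ q, (l * (lam - kap) * |1 - b * q.2| + 2 * kap * (a - max 1 b) * (l + q.1)) ∂ρ := by
        rw [integral_add habs haff, integral_const_mul, integral_const_mul,
          integral_add (integrable_const l) hu, integral_const, probReal_univ, one_smul]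

end LowerBound

/-- Lower bound for the auxiliary minimization problem: for every admissible
`ρ`, `∫ H dρ ≥ l(|1-b|(λ-κ-2κ(c+1)) + 2κ(c+1)(a - min(b,1)))`. -/
theorem intH_lower_bound (a b c l lam kap : ℝ)
    (ha0 : 0 ≤ a) (hb0 : 0 ≤ b) (hc0 : 0 ≤ c) (hl0 : 0 ≤ l) (hlam0 : 0 ≤ lam) (hkap0 : 0 ≤ kap)
    (hab : a ≤ min 1 b) (hlk : kap ≤ lam)
    (ρ : Measure (ℝ × ℝ)) (hρ : ρ ∈ Adm c l) :
    ((l * (|1 - b| * (lam - kap - 2 * kap * (c + 1)) +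
        2 * kap * (c + 1) * (a - min b 1)) : ℝ) : EReal) ≤ intH l lam kap a b ρ := by
  have := hρ.1
  exact intH_lower_bound_general hl0 hkap0 (hab.trans (min_le_right 1 b)) hlk
    (hρ.2.1.mono fun _ hq => hq.1) (integrable_fst_of_mem_adm hρ)
    (integral_fst_le_of_mem_adm (mul_nonneg hc0 hl0) hρ) (integral_snd_of_mem_adm hρ)

end
end

section
/- For every integer k ≥ 1 there exist a constant c > 0 and sequences (μ_n), (ν_n) of Borel probability measures on [0,1]² ⊆ ℝ² (i.e., d = 1, T = 2) whose Lebesgue densities f_n, g_n are k-times continuously differentiable with sup_n (‖f_n‖_{k,1} + ‖g_n‖_{k,1}) < ∞, such that 0 < W₁(μ_n, ν_n) for all n, W₁(μ_n, ν_n) → 0 as n → ∞, and AW₁(μ_n, ν_n) ≥ c · W₁(μ_n, ν_n)^{k/(k+1)} for every n. Hence the exponent k/(k+1) in the bound of the adapted Wasserstein distance AW₁ by W₁^{k/(k+1)} for measures with k-th order Sobolev densities cannot be improved. -/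
open MeasureTheory ProbabilityTheory
open scoped ENNReal

noncomputable section

/-- The degree `|α|` of a multi-index on the path space. -/
def mdegP {d T : ℕ} (α : Fin T × Fin d → ℕ) : ℕ := ∑ p, α p

/-- The (finite) set of multi-indices of degree at most `k`. -/
def mIdxP (d T k : ℕ) : Finset (Fin T × Fin d → ℕ) :=
  (Fintype.piFinset fun _ : Fin T × Fin d => Finset.range (k + 1)).filter fun α => mdegP α ≤ k

/-- Iterated partial derivative along a list of coordinate directions. -/
def iterPDerivP {d T : ℕ} : List (Fin T × Fin d) → (Traj d T → ℝ) → (Traj d T → ℝ)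
  | [], f => f
  | p :: ps, f => iterPDerivP ps fun x => fderiv ℝ f x (Pi.single p.1 (Pi.single p.2 1))

/-- The partial derivative `D^α f` associated with a multi-index `α`. -/
def mderivP {d T : ℕ} (α : Fin T × Fin d → ℕ) (f : Traj d T → ℝ) : Traj d T → ℝ :=
  iterPDerivP ((Finset.univ : Finset (Fin T × Fin d)).toList.flatMap
    fun p => List.replicate (α p) p) f

/-- The Sobolev norm `‖f‖_{k,1} = ∑_{|α| ≤ k} ‖D^α f‖_{L¹}` on the path space. -/
def sobNormP (d T k : ℕ) (f : Traj d T → ℝ) : ℝ :=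
  ∑ α ∈ mIdxP d T k, ∫ x, |mderivP α f x|

/-- The Wasserstein-1 distance on the path space with the `ℓ¹` cost `|x-y|₁`. -/
def W1l1 {d T : ℕ} (μ ν : Measure (Traj d T)) : ℝ≥0∞ :=
  ⨅ π ∈ Cpl μ ν, ∫⁻ q, ENNReal.ofReal (∑ i, ∑ j, |q.1 i j - q.2 i j|) ∂π

/-- The adapted Wasserstein-1 distance on the path space with the `ℓ¹` cost `|x-y|₁`. -/
def AW1l1 {d T : ℕ} (μ ν : Measure (Traj d T)) : ℝ≥0∞ :=
  ⨅ π ∈ BCpl μ ν, ∫⁻ q, ENNReal.ofReal (∑ i, ∑ j, |q.1 i j - q.2 i j|) ∂π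

/-!
Perturb a smooth product density `ρ ⊗ ρ` by a product of odd oscillations whose first factor has
width `ε` and height `ε ^ (k - 1)`. A `j`-th derivative of that factor has `L¹` norm of order
`ε ^ (k - j)`, so the Sobolev norms of order `k` stay bounded. Reflecting `x₁` about `1 / 2`
exchanges the positive and the negative part of the perturbation, hence moves a mass of order
`ε ^ k` over a distance of order `ε`, and `W₁` is at most of order `ε ^ (k + 1)`. Under a bicausal
coupling with the product law, however, `X₁` is independent of `Y₂`, whereas the oscillations of the
perturbation, evaluated at `X₁` and `X₂`, have a covariance of order `ε ^ k`, for which `AW₁` has to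
pay.
-/

/-! ### Conditional independence and bicausal couplings -/

lemma indepFun_comp_of_indepFun_map {Ω Ω' β γ : Type*} [MeasurableSpace Ω] [MeasurableSpace Ω']
    [MeasurableSpace β] [MeasurableSpace γ] {μ : Measure Ω} {f : Ω → Ω'} (hf : Measurable f)
    {X : Ω' → β} {Y : Ω' → γ} (hX : Measurable X) (hY : Measurable Y)
    (h : IndepFun X Y (μ.map f)) : IndepFun (X ∘ f) (Y ∘ f) μ := by
  rw [indepFun_iff_measure_inter_preimage_eq_mul] at h ⊢
  intro s t hs ht
  have hst := h s t hs ht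
  rwa [Measure.map_apply hf ((hX hs).inter (hY ht)), Measure.map_apply hf (hX hs),
    Measure.map_apply hf (hY ht)] at hst

lemma indep_of_condIndep_of_indep {Ω : Type*} {m' m₁ m₂ mΩ : MeasurableSpace Ω}
    [StandardBorelSpace Ω] {π : Measure Ω} [IsProbabilityMeasure π] (hm' : m' ≤ mΩ)
    (hm₁ : m₁ ≤ mΩ) (hm₂ : m₂ ≤ mΩ) (h : CondIndep m' m₁ m₂ hm' π) (h' : Indep m₂ m' π) :
    Indep m₁ m₂ π := by
  refine (Indep_iff _ _ _).2 fun s t hs ht => ?_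
  have hsΩ : MeasurableSet s := hm₁ s hs
  have htΩ : MeasurableSet t := hm₂ t ht
  have hst : π⟦s ∩ t | m'⟧ =ᵐ[π] π⟦s | m'⟧ * π⟦t | m'⟧ :=
    (condIndep_iff m' m₁ m₂ hm' hm₁ hm₂ π).1 h s t hs ht
  have ht_const : π⟦t | m'⟧ =ᵐ[π] fun _ => π.real t := by
    simpa [integral_indicator htΩ] using
      condExp_indep_eq hm₂ hm' (stronglyMeasurable_const (b := (1 : ℝ)).indicator ht) h'
  have integral_condProb {u : Set Ω} (hu : MeasurableSet u) : ∫ ω, (π⟦u | m'⟧) ω ∂π = π.real u := by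
    rw [integral_condExp hm', integral_indicator hu, setIntegral_const, smul_eq_mul, mul_one]
  have hreal : π.real (s ∩ t) = π.real s * π.real t := by
    rw [← integral_condProb (hsΩ.inter htΩ), ← integral_condProb hsΩ, ← integral_mul_const]
    refine integral_congr_ae ?_
    filter_upwards [hst, ht_const] with ω hω hωt
    rw [hω, Pi.mul_apply, hωt]
  rwa [measureReal_def, measureReal_def, measureReal_def, ← ENNReal.toReal_mul,
    ENNReal.toReal_eq_toReal_iff' (by finiteness) (by finiteness)] at hreal

/-- Under a bicausal coupling the past of the first path sees the second path only through the
past of the second path, so it is independent of whatever that past is independent of. -/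
lemma indepFun_restr_of_mem_BCpl {d T t : ℕ} {β : Type*} [MeasurableSpace β]
    {μ ν : Measure (Traj d T)} {π : Measure (Traj d T × Traj d T)} (hπ : π ∈ BCpl μ ν)
    (ht : 1 ≤ t) (h : t + 1 ≤ T) {v : Traj d T → β} (hv : Measurable v)
    (hind : IndepFun (restr d (Nat.le_of_succ_le h)) v ν) :
    IndepFun (fun q : Traj d T × Traj d T => restr d (Nat.le_of_succ_le h) q.1)
      (fun q => v q.2) π := by
  obtain ⟨⟨_, -, rfl⟩, _, hbc⟩ := hπ
  have hindπ : IndepFun (fun q : Traj d T × Traj d T => v q.2)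
      (fun q => restr d (Nat.le_of_succ_le h) q.2) π :=
    (indepFun_comp_of_indepFun_map measurable_snd (measurable_restr d _) hv hind).symm
  have hvY : MeasurableSpace.comap (fun q : Traj d T × Traj d T => v q.2) inferInstance ≤
      sigmaY d T le_rfl :=
    (hv.comp (comap_measurable fun q : Traj d T × Traj d T => restr d le_rfl q.2)).comap_le
  exact indep_of_condIndep_of_indep (sigmaY_le d T _) (sigmaX_le d T _)
    (hvY.trans (sigmaY_le d T _)) (condIndep_of_condIndep_of_le_right (hbc t ht h).2 hvY) hindπ

/-! ### Lower bounds for transport costs -/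

/-- The `ℓ¹` distance `|x - y|₁` on the path space, the cost in `W1l1` and `AW1l1`. -/
def l1Dist {d T : ℕ} (x y : Traj d T) : ℝ := ∑ i, ∑ j, |x i j - y i j|

lemma measurable_l1Dist {d T : ℕ} :
    Measurable fun q : Traj d T × Traj d T => l1Dist q.1 q.2 := by
  unfold l1Dist; fun_prop

lemma l1Dist_self {d T : ℕ} (x : Traj d T) : l1Dist x x = 0 := by simp [l1Dist]

lemma dist_le_l1Dist {d T : ℕ} (x y : Traj d T) : dist x y ≤ l1Dist x y := by
  have row_nonneg (i : Fin T) : 0 ≤ ∑ j, |x i j - y i j| :=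
    Finset.sum_nonneg fun j _ => abs_nonneg _
  refine (dist_pi_le_iff (Finset.sum_nonneg fun i _ => row_nonneg i)).2 fun i => ?_
  calc dist (x i) (y i) ≤ ∑ j, |x i j - y i j| :=
        (dist_pi_le_iff (row_nonneg i)).2 fun j => Finset.single_le_sum
          (f := fun j => |x i j - y i j|) (fun j _ => abs_nonneg _) (Finset.mem_univ j)
    _ ≤ l1Dist x y := Finset.single_le_sum (fun i _ => row_nonneg i) (Finset.mem_univ i)

lemma abs_sub_le_mul_l1Dist {d T : ℕ} {K : NNReal} {F : Traj d T → ℝ}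
    (hF : LipschitzWith K F) (x y : Traj d T) : |F x - F y| ≤ K * l1Dist x y :=
  (hF.dist_le_mul x y).trans (mul_le_mul_of_nonneg_left (dist_le_l1Dist x y) K.coe_nonneg)

lemma ofReal_abs_integral_div_le_lintegral_l1Dist {d T : ℕ}
    {π : Measure (Traj d T × Traj d T)} {F : Traj d T × Traj d T → ℝ} {K : NNReal}
    (hF : ∀ q, |F q| ≤ K * l1Dist q.1 q.2) :
    ENNReal.ofReal |∫ q, F q ∂π| / K ≤ ∫⁻ q, ENNReal.ofReal (l1Dist q.1 q.2) ∂π := by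
  refine ENNReal.div_le_of_le_mul' ?_
  calc ENNReal.ofReal |∫ q, F q ∂π| ≤ ∫⁻ q, ‖F q‖ₑ ∂π := by
        rw [← Real.enorm_eq_ofReal_abs]; exact enorm_integral_le_lintegral_enorm F
    _ ≤ ∫⁻ q, K * ENNReal.ofReal (l1Dist q.1 q.2) ∂π := by
        refine lintegral_mono fun q => ?_
        rw [Real.enorm_eq_ofReal_abs, ← ENNReal.ofReal_coe_nnreal,
          ← ENNReal.ofReal_mul K.coe_nonneg]
        exact ENNReal.ofReal_le_ofReal (hF q)
    _ = K * ∫⁻ q, ENNReal.ofReal (l1Dist q.1 q.2) ∂π :=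
        lintegral_const_mul' _ _ ENNReal.coe_ne_top

lemma ofReal_abs_integral_sub_div_le_W1l1 {d T : ℕ} {μ ν : Measure (Traj d T)}
    {F : Traj d T → ℝ} {K : NNReal} (hF : LipschitzWith K F) (hμ : Integrable F μ)
    (hν : Integrable F ν) :
    ENNReal.ofReal |∫ x, F x ∂μ - ∫ x, F x ∂ν| / K ≤ W1l1 μ ν := by
  refine le_iInf₂ fun π ⟨_, hfst, hsnd⟩ => ?_
  subst hfst hsnd
  have hX : Integrable (fun q : Traj d T × Traj d T => F q.1) π := hμ.comp_measurable measurable_fst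
  have hY : Integrable (fun q : Traj d T × Traj d T => F q.2) π := hν.comp_measurable measurable_snd
  rw [integral_map measurable_fst.aemeasurable hμ.1, integral_map measurable_snd.aemeasurable hν.1,
    ← integral_sub hX hY]
  exact ofReal_abs_integral_div_le_lintegral_l1Dist fun q => abs_sub_le_mul_l1Dist hF q.1 q.2

/-- If the past of `Y` is independent of `v Y`, then `v Y` is also decorrelated from the past of
`X` under a bicausal coupling, so transport has to pay for the covariance of `u` and `v`
under `μ`. -/
lemma ofReal_abs_covariance_div_le_AW1l1 {d T t : ℕ} {μ ν : Measure (Traj d T)} (ht : 1 ≤ t)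
    (h : t + 1 ≤ T) {u : Traj d t → ℝ} (hu : Measurable u) (hu₁ : ∀ y, |u y| ≤ 1)
    {v : Traj d T → ℝ} {K : NNReal} (hv : LipschitzWith K v) (hμ : Integrable v μ)
    (hν : Integrable v ν) (hind : IndepFun (restr d (Nat.le_of_succ_le h)) v ν) :
    ENNReal.ofReal |∫ x, u (restr d (Nat.le_of_succ_le h) x) * v x ∂μ -
      (∫ x, u (restr d (Nat.le_of_succ_le h) x) ∂μ) * ∫ x, v x ∂ν| / K ≤ AW1l1 μ ν := by
  refine le_iInf₂ fun π hπ => ?_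
  have hindπ := indepFun_restr_of_mem_BCpl hπ ht h hv.continuous.measurable hind
  obtain ⟨⟨_, hfst, hsnd⟩, -⟩ := hπ
  subst hfst hsnd
  set past := restr d (Nat.le_of_succ_le h)
  have hpast : Measurable past := measurable_restr d _
  have hup : Measurable fun x => u (past x) := hu.comp hpast
  have hupv : Measurable fun x => u (past x) * v x := hup.mul hv.continuous.measurable
  have integrable_mul {w : Traj d T × Traj d T → ℝ} (hw : Integrable w π) :
      Integrable (fun q => u (past q.1) * w q) π :=
    hw.bdd_mul (hup.comp measurable_fst).aestronglyMeasurable (ae_of_all _ fun q => hu₁ _)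
  have hX : Integrable (fun q => u (past q.1) * v q.1) π :=
    integrable_mul (hμ.comp_measurable measurable_fst)
  have hY : Integrable (fun q => u (past q.1) * v q.2) π :=
    integrable_mul (hν.comp_measurable measurable_snd)
  have hprod : ∫ q, u (past q.1) * v q.2 ∂π =
      (∫ q, u (past q.1) ∂π) * ∫ q, v q.2 ∂π :=
    hindπ.integral_fun_comp_mul_comp (g := id) (hpast.comp measurable_fst).aemeasurable
      (hv.continuous.measurable.comp measurable_snd).aemeasurable hu.aestronglyMeasurable
      aestronglyMeasurable_id
  rw [integral_map measurable_fst.aemeasurable hupv.aestronglyMeasurable,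
    integral_map measurable_fst.aemeasurable hup.aestronglyMeasurable,
    integral_map measurable_snd.aemeasurable hν.1, ← hprod,
    ← integral_sub hX hY]
  refine ofReal_abs_integral_div_le_lintegral_l1Dist fun q => ?_
  calc |u (past q.1) * v q.1 - u (past q.1) * v q.2| = |u (past q.1)| * |v q.1 - v q.2| := by
        rw [← mul_sub, abs_mul]
    _ ≤ |v q.1 - v q.2| := mul_le_of_le_one_left (abs_nonneg _) (hu₁ _)
    _ ≤ K * l1Dist q.1 q.2 := abs_sub_le_mul_l1Dist hv q.1 q.2

lemma W1l1_pos_of_integral_ne {d T : ℕ} {μ ν : Measure (Traj d T)} {F : Traj d T → ℝ}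
    {K : NNReal} (hF : LipschitzWith K F) (hμ : Integrable F μ) (hν : Integrable F ν)
    (hne : ∫ x, F x ∂μ ≠ ∫ x, F x ∂ν) : 0 < W1l1 μ ν :=
  (ENNReal.div_pos (ENNReal.ofReal_pos.2 (abs_pos.2 (sub_ne_zero.2 hne))).ne'
    ENNReal.coe_ne_top).trans_le (ofReal_abs_integral_sub_div_le_W1l1 hF hμ hν)

/-! ### Laws with a density -/

section DensityLaw

variable {Ω : Type*} [MeasureSpace Ω] {f g : Ω → ℝ}

/-- The measure with Lebesgue density `f`; it only sees the positive part of `f`. -/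
def densityLaw (f : Ω → ℝ) : Measure Ω := volume.withDensity fun x => ENNReal.ofReal (f x)

lemma isProbabilityMeasure_densityLaw (hf : Integrable f) (hf₀ : ∀ x, 0 ≤ f x)
    (hf₁ : ∫ x, f x = 1) : IsProbabilityMeasure (densityLaw f) := by
  refine ⟨?_⟩
  rw [densityLaw, withDensity_apply _ .univ, setLIntegral_univ,
    ← ofReal_integral_eq_lintegral_ofReal hf (ae_of_all _ hf₀), hf₁, ENNReal.ofReal_one]

lemma densityLaw_compl_eq_zero {S : Set Ω} (hS : MeasurableSet S) (hf : ∀ x ∉ S, f x = 0) :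
    densityLaw f Sᶜ = 0 := by
  rw [densityLaw, withDensity_apply _ hS.compl]
  exact setLIntegral_eq_zero hS.compl fun x hx => by simp [hf x hx]

lemma integral_densityLaw (hf : Measurable f) (hf₀ : ∀ x, 0 ≤ f x) (F : Ω → ℝ) :
    ∫ x, F x ∂densityLaw f = ∫ x, f x * F x := by
  rw [densityLaw, integral_withDensity_eq_integral_toReal_smul hf.ennreal_ofReal
    (ae_of_all _ fun _ => ENNReal.ofReal_lt_top)]
  simp only [ENNReal.toReal_ofReal (hf₀ _), smul_eq_mul]

lemma integrable_densityLaw_of_continuous [TopologicalSpace Ω] [OpensMeasurableSpace Ω]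
    [IsFiniteMeasureOnCompacts (volume : Measure Ω)] (hf : Continuous f)
    (hf' : HasCompactSupport f) (hf₀ : ∀ x, 0 ≤ f x) {F : Ω → ℝ} (hF : Continuous F) :
    Integrable F (densityLaw f) := by
  rw [densityLaw, integrable_withDensity_iff hf.measurable.ennreal_ofReal
    (ae_of_all _ fun _ => ENNReal.ofReal_lt_top)]
  simp only [ENNReal.toReal_ofReal (hf₀ _)]
  exact (hF.mul hf).integrable_of_hasCompactSupport hf'.mul_left

lemma lintegral_densityLaw_le (hfm : Measurable f) (hf : Integrable f) {F : Ω → ℝ≥0∞} {C : ℝ≥0∞}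
    (hF : ∀ x, f x ≠ 0 → F x ≤ C) :
    ∫⁻ x, F x ∂densityLaw f ≤ C * ENNReal.ofReal (∫ x, |f x|) := by
  calc ∫⁻ x, F x ∂densityLaw f
      ≤ ∫⁻ x, ENNReal.ofReal (f x) * F x :=
        lintegral_withDensity_le_lintegral_mul _ hfm.ennreal_ofReal _
    _ ≤ ∫⁻ x, ENNReal.ofReal |f x| * C := by
        refine lintegral_mono fun x => ?_
        by_cases hx : f x = 0
        · simp [hx]
        · exact mul_le_mul' (ENNReal.ofReal_le_ofReal (le_abs_self _)) (hF x hx)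
    _ = C * ENNReal.ofReal (∫ x, |f x|) := by
        rw [lintegral_mul_const'' _ hf.abs.1.aemeasurable.ennreal_ofReal,
          ofReal_integral_eq_lintegral_ofReal hf.abs (ae_of_all _ fun _ => abs_nonneg _), mul_comm]

lemma densityLaw_inf_add_sub (hf : Measurable f) (hg : Measurable g) (hf₀ : ∀ x, 0 ≤ f x) :
    densityLaw (f ⊓ g) + densityLaw (g - f) = densityLaw g := by
  rw [densityLaw, densityLaw, densityLaw,
    ← withDensity_add_left (hf.inf hg).ennreal_ofReal]
  congr with x
  simp only [Pi.add_apply, Pi.inf_apply, Pi.sub_apply]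
  rcases le_total (f x) (g x) with h | h
  · rw [inf_of_le_left h, ← ENNReal.ofReal_add (hf₀ x) (sub_nonneg.2 h), add_sub_cancel]
  · rw [inf_of_le_right h, ENNReal.ofReal_of_nonpos (sub_nonpos.2 h), add_zero]

end DensityLaw

lemma map_withDensity_comp {Ω Ω' : Type*} [MeasurableSpace Ω] [MeasurableSpace Ω']
    {μ : Measure Ω} {ν : Measure Ω'} {R : Ω → Ω'} (hR : MeasurePreserving R μ ν) {h : Ω' → ℝ≥0∞}
    (hh : Measurable h) : (μ.withDensity (h ∘ R)).map R = ν.withDensity h := by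
  ext s hs
  rw [Measure.map_apply hR.measurable hs, withDensity_apply _ (hR.measurable hs),
    withDensity_apply _ hs]
  exact hR.setLIntegral_comp_preimage hs hh

/-! ### Upper bound for the Wasserstein distance -/

lemma W1l1_add_map_le {d T : ℕ} {κ η : Measure (Traj d T)} [IsProbabilityMeasure (κ + η)]
    {R : Traj d T → Traj d T} (hR : Measurable R) :
    W1l1 (κ + η) (κ + η.map R) ≤ ∫⁻ x, ENNReal.ofReal (l1Dist x (R x)) ∂η := by
  have hdiag : Measurable fun x : Traj d T => (x, x) := measurable_id.prodMk measurable_id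
  have hgraph : Measurable fun x : Traj d T => (x, R x) := measurable_id.prodMk hR
  set π := κ.map (fun x => (x, x)) + η.map (fun x => (x, R x))
  have hfst : π.map Prod.fst = κ + η := by
    simp [π, Measure.map_add, measurable_fst, Measure.map_map measurable_fst hdiag,
      Measure.map_map measurable_fst hgraph, Function.comp_def]
  have hsnd : π.map Prod.snd = κ + η.map R := by
    simp [π, Measure.map_add, measurable_snd, Measure.map_map measurable_snd hdiag,
      Measure.map_map measurable_snd hgraph, Function.comp_def]
  have hprob : IsProbabilityMeasure π :=
    ⟨by rw [← Set.preimage_univ (f := Prod.fst), ← Measure.map_apply measurable_fst .univ, hfst,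
      measure_univ]⟩
  have hcost : Measurable fun q : Traj d T × Traj d T => ENNReal.ofReal (l1Dist q.1 q.2) :=
    measurable_l1Dist.ennreal_ofReal
  calc W1l1 (κ + η) (κ + η.map R) ≤ ∫⁻ q, ENNReal.ofReal (l1Dist q.1 q.2) ∂π :=
        iInf₂_le π ⟨hprob, hfst, hsnd⟩
    _ = ∫⁻ x, ENNReal.ofReal (l1Dist x (R x)) ∂η := by
        rw [lintegral_add_measure, lintegral_map hcost hdiag, lintegral_map hcost hgraph]
        simp [l1Dist_self]

/-- The common mass `f ⊓ g` stays in place while `R` carries `(g - f)⁺` onto `(f - g)⁺`. -/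
lemma W1l1_densityLaw_le {d T : ℕ} {f g : Traj d T → ℝ} (hf : Measurable f) (hg : Measurable g)
    (hf₀ : ∀ x, 0 ≤ f x) (hg₀ : ∀ x, 0 ≤ g x) [IsProbabilityMeasure (densityLaw g)]
    {R : Traj d T → Traj d T} (hR : MeasurePreserving R)
    (hswap : ∀ x, (f - g) (R x) = (g - f) x) :
    W1l1 (densityLaw g) (densityLaw f) ≤
      ∫⁻ x, ENNReal.ofReal (l1Dist x (R x)) ∂densityLaw (g - f) := by
  have hmap : (densityLaw (g - f)).map R = densityLaw (f - g) := by
    rw [densityLaw, densityLaw, ← map_withDensity_comp hR (hf.sub hg).ennreal_ofReal]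
    simp only [Function.comp_def, hswap]
  have hsplit := densityLaw_inf_add_sub hf hg hf₀
  have : IsProbabilityMeasure (densityLaw (f ⊓ g) + densityLaw (g - f)) := by rwa [hsplit]
  have hle := W1l1_add_map_le (κ := densityLaw (f ⊓ g)) (η := densityLaw (g - f)) hR.measurable
  rwa [hmap, hsplit, inf_comm, densityLaw_inf_add_sub hg hf hg₀] at hle

lemma W1l1_densityLaw_pos {d T : ℕ} {f g : Traj d T → ℝ} (hf : ContDiff ℝ 1 f)
    (hg : ContDiff ℝ 1 g) (hf' : HasCompactSupport f) (hg' : HasCompactSupport g)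
    (hf₀ : ∀ x, 0 ≤ f x) (hg₀ : ∀ x, 0 ≤ g x) (hne : f ≠ g) :
    0 < W1l1 (densityLaw f) (densityLaw g) := by
  have hF : ContDiff ℝ 1 (f - g) := hf.sub hg
  have hF' : HasCompactSupport (f - g) := hf'.sub hg'
  obtain ⟨K, hK⟩ := hF.lipschitzWith_of_hasCompactSupport hF' one_ne_zero
  have integrable_mul {h : Traj d T → ℝ} (hh : Continuous h) :
      Integrable fun x => h x * (f - g) x :=
    (hh.mul hF.continuous).integrable_of_hasCompactSupport hF'.mul_left
  have hdiff : ∫ x, (f - g) x ∂densityLaw f - ∫ x, (f - g) x ∂densityLaw g =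
      ∫ x, (f - g) x * (f - g) x := by
    rw [integral_densityLaw hf.continuous.measurable hf₀,
      integral_densityLaw hg.continuous.measurable hg₀,
      ← integral_sub (integrable_mul hf.continuous) (integrable_mul hg.continuous)]
    simp only [Pi.sub_apply, sub_mul]
  obtain ⟨x, hx⟩ := Function.ne_iff.1 (sub_ne_zero.2 hne)
  refine W1l1_pos_of_integral_ne hK
    (integrable_densityLaw_of_continuous hf.continuous hf' hf₀ hF.continuous)
    (integrable_densityLaw_of_continuous hg.continuous hg' hg₀ hF.continuous) (sub_ne_zero.1 ?_)
  rw [hdiff]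
  exact ((hF.continuous.mul hF.continuous).integral_pos_of_hasCompactSupport_nonneg_nonzero
    hF'.mul_right (fun _ => mul_self_nonneg _) (mul_self_ne_zero.2 hx)).ne'

/-! ### Partial derivatives and Sobolev norms -/

section PartialDerivatives

variable {d T : ℕ} {f g : Traj d T → ℝ}

lemma contDiff_iterPDerivP (l : List (Fin T × Fin d)) (hf : ContDiff ℝ (⊤ : ℕ∞) f) :
    ContDiff ℝ (⊤ : ℕ∞) (iterPDerivP l f) := by
  induction l generalizing f with
  | nil => exact hf
  | cons p _ ih => exact ih ((hf.fderiv_right le_rfl).clm_apply contDiff_const)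

lemma hasCompactSupport_iterPDerivP (l : List (Fin T × Fin d)) (hf : HasCompactSupport f) :
    HasCompactSupport (iterPDerivP l f) := by
  induction l generalizing f with
  | nil => exact hf
  | cons p _ ih => exact ih (hf.fderiv_apply ℝ _)

lemma integrable_mderivP (hf : ContDiff ℝ (⊤ : ℕ∞) f) (hf' : HasCompactSupport f)
    (α : Fin T × Fin d → ℕ) : Integrable (mderivP α f) :=
  (contDiff_iterPDerivP _ hf).continuous.integrable_of_hasCompactSupport
    (hasCompactSupport_iterPDerivP _ hf')

lemma iterPDerivP_add (l : List (Fin T × Fin d)) (hf : ContDiff ℝ (⊤ : ℕ∞) f)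
    (hg : ContDiff ℝ (⊤ : ℕ∞) g) :
    iterPDerivP l (f + g) = iterPDerivP l f + iterPDerivP l g := by
  induction l generalizing f g with
  | nil => rfl
  | cons p l ih =>
    have hadd : (fun x => fderiv ℝ (f + g) x (Pi.single p.1 (Pi.single p.2 1))) =
        (fun x => fderiv ℝ f x (Pi.single p.1 (Pi.single p.2 1))) +
          fun x => fderiv ℝ g x (Pi.single p.1 (Pi.single p.2 1)) := by
      ext x
      rw [fderiv_add (hf.differentiable (by simp) x) (hg.differentiable (by simp) x)]
      rfl
    rw [iterPDerivP, hadd]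
    exact ih ((hf.fderiv_right le_rfl).clm_apply contDiff_const)
      ((hg.fderiv_right le_rfl).clm_apply contDiff_const)

lemma sobNormP_add_le (k : ℕ) (hf : ContDiff ℝ (⊤ : ℕ∞) f) (hf' : HasCompactSupport f)
    (hg : ContDiff ℝ (⊤ : ℕ∞) g) (hg' : HasCompactSupport g) :
    sobNormP d T k (f + g) ≤ sobNormP d T k f + sobNormP d T k g := by
  rw [sobNormP, sobNormP, sobNormP, ← Finset.sum_add_distrib]
  refine Finset.sum_le_sum fun α _ => ?_
  have hfα := (integrable_mderivP hf hf' α).abs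
  have hgα := (integrable_mderivP hg hg' α).abs
  rw [← integral_add hfα hgα, mderivP, iterPDerivP_add _ hf hg]
  exact integral_mono_of_nonneg (ae_of_all _ fun _ => abs_nonneg _) (hfα.add hgα)
    (ae_of_all _ fun _ => abs_add_le _ _)

lemma apply_le_of_mem_mIdxP {k : ℕ} {α : Fin T × Fin d → ℕ} (hα : α ∈ mIdxP d T k)
    (p : Fin T × Fin d) : α p ≤ k :=
  (Finset.single_le_sum (fun _ _ => Nat.zero_le _) (Finset.mem_univ p)).trans
    (Finset.mem_filter.1 hα).2

lemma count_flatMap_replicate (α : Fin T × Fin d → ℕ) (p : Fin T × Fin d) :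
    ((Finset.univ : Finset (Fin T × Fin d)).toList.flatMap
      fun q => List.replicate (α q) q).count p = α p := by
  rw [List.count_flatMap]
  simp [Function.comp_def, List.count_replicate]

end PartialDerivatives

/-! ### Tensor products on `ℝ²` -/

/-- The function `u ⊗ v : x ↦ u x₁ * v x₂` on the path space `ℝ²`. -/
def tensor (u v : ℝ → ℝ) (x : Traj 1 2) : ℝ := u (x 0 0) * v (x 1 0)

section Tensor

variable {u v : ℝ → ℝ}

lemma measurePreserving_coords : MeasurePreserving fun x : Traj 1 2 => (x 0 0, x 1 0) :=
  ((volume_preserving_funUnique (Fin 1) ℝ).prod (volume_preserving_funUnique (Fin 1) ℝ)).comp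
    (volume_preserving_finTwoArrow (Fin 1 → ℝ))

lemma measurableEmbedding_coords : MeasurableEmbedding fun x : Traj 1 2 => (x 0 0, x 1 0) :=
  (MeasurableEquiv.finTwoArrow.trans ((MeasurableEquiv.funUnique (Fin 1) ℝ).prodCongr
    (MeasurableEquiv.funUnique (Fin 1) ℝ))).measurableEmbedding

lemma measurable_tensor (hu : Measurable u) (hv : Measurable v) : Measurable (tensor u v) := by
  unfold tensor; fun_prop

lemma tensor_nonneg (hu : ∀ t, 0 ≤ u t) (hv : ∀ t, 0 ≤ v t) (x : Traj 1 2) :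
    0 ≤ tensor u v x :=
  mul_nonneg (hu _) (hv _)

lemma tensor_mul_tensor (u v u' v' : ℝ → ℝ) :
    tensor u v * tensor u' v' = tensor (u * u') (v * v') :=
  funext fun _ => mul_mul_mul_comm _ _ _ _

lemma integrable_tensor (hu : Integrable u) (hv : Integrable v) : Integrable (tensor u v) :=
  measurePreserving_coords.integrable_comp_of_integrable (hu.mul_prod hv)

lemma integral_tensor (u v : ℝ → ℝ) : ∫ x, tensor u v x = (∫ t, u t) * ∫ t, v t := by
  rw [← integral_prod_mul]
  exact measurePreserving_coords.integral_comp measurableEmbedding_coords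
    (fun z : ℝ × ℝ => u z.1 * v z.2)

lemma integral_abs_tensor (u v : ℝ → ℝ) :
    ∫ x, |tensor u v x| = (∫ t, |u t|) * ∫ t, |v t| := by
  simp only [← integral_tensor, tensor, abs_mul]

lemma continuous_tensor (hu : Continuous u) (hv : Continuous v) : Continuous (tensor u v) := by
  unfold tensor; fun_prop

lemma contDiff_tensor {n : WithTop ℕ∞} (hu : ContDiff ℝ n u) (hv : ContDiff ℝ n v) :
    ContDiff ℝ n (tensor u v) := by
  unfold tensor; fun_prop

lemma hasCompactSupport_tensor (hu : HasCompactSupport u) (hv : HasCompactSupport v) :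
    HasCompactSupport (tensor u v) := by
  refine HasCompactSupport.intro (K := Set.univ.pi fun i => Set.univ.pi fun _ =>
    ![tsupport u, tsupport v] i) ?_ fun x hx => ?_
  · refine isCompact_univ_pi fun i => isCompact_univ_pi fun _ => ?_
    fin_cases i
    exacts [hu, hv]
  · simp only [Set.mem_univ_pi, Fin.forall_fin_two, Fin.forall_fin_one, Matrix.cons_val_zero,
      Matrix.cons_val_one, not_and_or] at hx
    exact mul_eq_zero.2 (hx.imp image_eq_zero_of_notMem_tsupport image_eq_zero_of_notMem_tsupport)

lemma fderiv_tensor_apply (hu : Differentiable ℝ u) (hv : Differentiable ℝ v) (x e : Traj 1 2) :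
    fderiv ℝ (tensor u v) x e =
      e 0 0 * tensor (deriv u) v x + e 1 0 * tensor u (deriv v) x := by
  have hasFDerivAt_coord (i : Fin 2) := ((ContinuousLinearMap.proj (R := ℝ) (φ := fun _ => ℝ)
    (0 : Fin 1)).comp (ContinuousLinearMap.proj (φ := fun _ : Fin 2 => Fin 1 → ℝ) i)).hasFDerivAt
      (x := x)
  have h : HasFDerivAt (tensor u v) _ x :=
    ((hu (x 0 0)).hasDerivAt.comp_hasFDerivAt x (hasFDerivAt_coord 0)).mul
      ((hv (x 1 0)).hasDerivAt.comp_hasFDerivAt x (hasFDerivAt_coord 1))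
  rw [h.fderiv]
  simp only [Function.comp_apply, ContinuousLinearMap.comp_apply,
    ContinuousLinearMap.proj_apply, add_apply, smul_apply, smul_eq_mul, tensor]
  ring

lemma iterPDerivP_tensor (l : List (Fin 2 × Fin 1)) (hu : ContDiff ℝ (⊤ : ℕ∞) u)
    (hv : ContDiff ℝ (⊤ : ℕ∞) v) : iterPDerivP l (tensor u v) =
      tensor (iteratedDeriv (l.count (0, 0)) u) (iteratedDeriv (l.count (1, 0)) v) := by
  induction l generalizing u v with
  | nil => simp [iterPDerivP]
  | cons p l ih =>
    obtain ⟨hu', hDu⟩ := contDiff_infty_iff_deriv.1 hu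
    obtain ⟨hv', hDv⟩ := contDiff_infty_iff_deriv.1 hv
    simp only [iterPDerivP, fderiv_tensor_apply hu' hv']
    obtain ⟨i, j⟩ := p
    obtain rfl : j = 0 := Subsingleton.elim _ _
    fin_cases i
    · simpa [iteratedDeriv_succ'] using ih hDu hv
    · simpa [iteratedDeriv_succ'] using ih hu hDv

lemma mderivP_tensor (α : Fin 2 × Fin 1 → ℕ) (hu : ContDiff ℝ (⊤ : ℕ∞) u)
    (hv : ContDiff ℝ (⊤ : ℕ∞) v) : mderivP α (tensor u v) =
      tensor (iteratedDeriv (α (0, 0)) u) (iteratedDeriv (α (1, 0)) v) := by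
  rw [mderivP, iterPDerivP_tensor _ hu hv, count_flatMap_replicate, count_flatMap_replicate]

/-- The unit square `[0,1]²` in the path space `ℝ²`. -/
def unitSquare : Set (Traj 1 2) := {x | ∀ i j, x i j ∈ Set.Icc (0 : ℝ) 1}

lemma unitSquare_eq_Icc : unitSquare = Set.Icc 0 1 := by
  ext x
  simp only [unitSquare, Set.mem_ofPred_eq, Set.mem_Icc, Pi.le_def, forall_and, Pi.zero_apply,
    Pi.one_apply]

lemma measurableSet_unitSquare : MeasurableSet unitSquare := unitSquare_eq_Icc ▸ measurableSet_Icc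

lemma support_tensor_subset_unitSquare (hu : Function.support u ⊆ Set.Icc 0 1)
    (hv : Function.support v ⊆ Set.Icc 0 1) : Function.support (tensor u v) ⊆ unitSquare := by
  intro x hx i j
  obtain rfl : j = 0 := Subsingleton.elim _ _
  fin_cases i
  · exact hu (left_ne_zero_of_mul hx)
  · exact hv (right_ne_zero_of_mul hx)

lemma densityLaw_tensor_map_coords (hu : Measurable u) (hv : Measurable v) (hu₀ : ∀ t, 0 ≤ u t) :
    (densityLaw (tensor u v)).map (fun x : Traj 1 2 => (x 0 0, x 1 0)) =
      (densityLaw u).prod (densityLaw v) := by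
  have hdensity : (fun x : Traj 1 2 => ENNReal.ofReal (tensor u v x)) =
      (fun z : ℝ × ℝ => ENNReal.ofReal (u z.1) * ENNReal.ofReal (v z.2)) ∘
        fun x => (x 0 0, x 1 0) :=
    funext fun x => ENNReal.ofReal_mul (hu₀ _)
  rw [densityLaw, hdensity, map_withDensity_comp measurePreserving_coords (by fun_prop),
    densityLaw, densityLaw, prod_withDensity hu.ennreal_ofReal hv.ennreal_ofReal]
  rfl

lemma indepFun_restr_densityLaw_tensor (hu : Measurable u) (hv : Measurable v)
    (hu₀ : ∀ t, 0 ≤ u t) [IsProbabilityMeasure (densityLaw u)]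
    [IsProbabilityMeasure (densityLaw v)] {w : ℝ → ℝ} (hw : Measurable w) :
    IndepFun (restr 1 one_le_two) (fun x => w (x 1 0)) (densityLaw (tensor u v)) := by
  have hprod : IndepFun (fun z : ℝ × ℝ => (fun _ _ => z.1 : Traj 1 1)) (fun z => w z.2)
      ((densityLaw (tensor u v)).map fun x : Traj 1 2 => (x 0 0, x 1 0)) := by
    rw [densityLaw_tensor_map_coords hu hv hu₀]
    exact indepFun_prod (X := fun s : ℝ => (fun _ _ => s : Traj 1 1)) (by fun_prop) hw
  have hrestr : restr 1 one_le_two = (fun z : ℝ × ℝ => (fun _ _ => z.1 : Traj 1 1)) ∘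
      fun x : Traj 1 2 => (x 0 0, x 1 0) := by
    ext x i j
    fin_cases i; fin_cases j
    rfl
  rw [hrestr]
  exact indepFun_comp_of_indepFun_map (by fun_prop) (by fun_prop) (by fun_prop) hprod

end Tensor

/-! ### Perturbed product densities -/

/-- The reflection `(x₁, x₂) ↦ (1 - x₁, x₂)` of `ℝ²`, used as a transport map. -/
def reflectFirst (x : Traj 1 2) : Traj 1 2 := ![1 - x 0, x 1]

lemma measurePreserving_reflectFirst : MeasurePreserving reflectFirst := by
  have hcoord (i : Fin 2) : MeasurePreserving (![fun y => 1 - y, id] i : (Fin 1 → ℝ) → _) := by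
    fin_cases i
    exacts [Measure.measurePreserving_sub_left volume 1, .id volume]
  convert volume_preserving_pi hcoord using 1
  ext x i
  fin_cases i <;> rfl

lemma l1Dist_reflectFirst (x : Traj 1 2) : l1Dist x (reflectFirst x) = |2 * x 0 0 - 1| := by
  simp only [l1Dist, reflectFirst, Fin.sum_univ_two, Fin.sum_univ_one, Matrix.cons_val_zero,
    Matrix.cons_val_one, Pi.sub_apply, Pi.one_apply, sub_self, abs_zero, add_zero]
  congr 1
  ring

/-- The density `ρ ⊗ ρ + p ⊗ q`: the perturbation `p ⊗ q` of the product density `ρ ⊗ ρ`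
correlates the two coordinates. -/
def perturbedProduct (ρ p q : ℝ → ℝ) : Traj 1 2 → ℝ := tensor ρ ρ + tensor p q

section PerturbedProduct

variable {ρ p q : ℝ → ℝ}

lemma perturbedProduct_nonneg (hp : ∀ t, |p t| ≤ ρ t) (hq : ∀ t, |q t| ≤ ρ t) (x : Traj 1 2) :
    0 ≤ perturbedProduct ρ p q x := by
  have hpq : |p (x 0 0) * q (x 1 0)| ≤ ρ (x 0 0) * ρ (x 1 0) := by
    rw [abs_mul]
    exact mul_le_mul (hp _) (hq _) (abs_nonneg _) ((abs_nonneg _).trans (hp _))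
  exact neg_le_iff_add_nonneg'.1 (neg_le_of_abs_le hpq)

lemma isProbabilityMeasure_densityLaw_perturbedProduct (hρ : Integrable ρ) (hp : Integrable p)
    (hq : Integrable q) (hpρ : ∀ t, |p t| ≤ ρ t) (hqρ : ∀ t, |q t| ≤ ρ t) (hρ₁ : ∫ t, ρ t = 1)
    (hq₁ : ∫ t, q t = 0) : IsProbabilityMeasure (densityLaw (perturbedProduct ρ p q)) := by
  refine isProbabilityMeasure_densityLaw ((integrable_tensor hρ hρ).add (integrable_tensor hp hq))
    (perturbedProduct_nonneg hpρ hqρ) ?_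
  simp only [perturbedProduct, Pi.add_apply]
  rw [integral_add (integrable_tensor hρ hρ) (integrable_tensor hp hq), integral_tensor,
    integral_tensor, hρ₁, hq₁, mul_zero, one_mul, add_zero]

lemma contDiff_perturbedProduct {n : WithTop ℕ∞} (hρ : ContDiff ℝ n ρ) (hp : ContDiff ℝ n p)
    (hq : ContDiff ℝ n q) : ContDiff ℝ n (perturbedProduct ρ p q) :=
  (contDiff_tensor hρ hρ).add (contDiff_tensor hp hq)

lemma continuous_perturbedProduct (hρ : Continuous ρ) (hp : Continuous p) (hq : Continuous q) :
    Continuous (perturbedProduct ρ p q) :=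
  (continuous_tensor hρ hρ).add (continuous_tensor hp hq)

lemma hasCompactSupport_perturbedProduct (hρ : HasCompactSupport ρ) (hp : HasCompactSupport p)
    (hq : HasCompactSupport q) : HasCompactSupport (perturbedProduct ρ p q) :=
  (hasCompactSupport_tensor hρ hρ).add (hasCompactSupport_tensor hp hq)

/-- Reflecting the first coordinate exchanges the positive and negative parts of `p ⊗ q`. -/
lemma W1l1_densityLaw_perturbedProduct_le (hρ : Measurable ρ) (hp : Measurable p)
    (hq : Measurable q) (hp' : Integrable p) (hq' : Integrable q) (hpρ : ∀ t, |p t| ≤ ρ t)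
    (hqρ : ∀ t, |q t| ≤ ρ t) [IsProbabilityMeasure (densityLaw (perturbedProduct ρ p q))]
    (hodd : ∀ t, p (1 - t) = -p t) {δ : ℝ} (hδ : ∀ t, p t ≠ 0 → |2 * t - 1| ≤ δ) :
    W1l1 (densityLaw (perturbedProduct ρ p q)) (densityLaw (tensor ρ ρ)) ≤
      ENNReal.ofReal δ * ENNReal.ofReal ((∫ t, |p t|) * ∫ t, |q t|) := by
  have hdiff : perturbedProduct ρ p q - tensor ρ ρ = tensor p q := add_sub_cancel_left _ _
  have hswap (x : Traj 1 2) : (tensor ρ ρ - perturbedProduct ρ p q) (reflectFirst x) =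
      (perturbedProduct ρ p q - tensor ρ ρ) x := by
    rw [← neg_sub, hdiff]
    simp [tensor, reflectFirst, hodd]
  have hρ₀ (t : ℝ) : 0 ≤ ρ t := (abs_nonneg _).trans (hpρ t)
  refine (W1l1_densityLaw_le (g := perturbedProduct ρ p q) (measurable_tensor hρ hρ)
    ((measurable_tensor hρ hρ).add (measurable_tensor hp hq)) (tensor_nonneg hρ₀ hρ₀)
    (perturbedProduct_nonneg hpρ hqρ) measurePreserving_reflectFirst hswap).trans ?_
  rw [hdiff, ← integral_abs_tensor]
  refine lintegral_densityLaw_le (measurable_tensor hp hq) (integrable_tensor hp' hq')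
    fun x hx => ?_
  rw [l1Dist_reflectFirst]
  exact ENNReal.ofReal_le_ofReal (hδ _ (left_ne_zero_of_mul hx))

lemma integral_tensor_densityLaw_perturbedProduct (hρ : Continuous ρ) (hp : Continuous p)
    (hq : Continuous q) (hρ' : HasCompactSupport ρ) (hp' : HasCompactSupport p)
    (hq' : HasCompactSupport q) (hpρ : ∀ t, |p t| ≤ ρ t) (hqρ : ∀ t, |q t| ≤ ρ t) {u v : ℝ → ℝ}
    (hu : Continuous u) (hv : Continuous v) :
    ∫ x, tensor u v x ∂densityLaw (perturbedProduct ρ p q) =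
      (∫ t, ρ t * u t) * (∫ t, ρ t * v t) + (∫ t, p t * u t) * ∫ t, q t * v t := by
  have integrable_mul {f g : ℝ → ℝ} (hf : Continuous f) (hf' : HasCompactSupport f)
      (hg : Continuous g) : Integrable (f * g) :=
    (hf.mul hg).integrable_of_hasCompactSupport hf'.mul_right
  have hsplit : perturbedProduct ρ p q * tensor u v =
      tensor (ρ * u) (ρ * v) + tensor (p * u) (q * v) := by
    rw [perturbedProduct, add_mul, tensor_mul_tensor, tensor_mul_tensor]
  calc ∫ x, tensor u v x ∂densityLaw (perturbedProduct ρ p q)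
      = ∫ x, (tensor (ρ * u) (ρ * v) + tensor (p * u) (q * v)) x := by
        rw [integral_densityLaw (continuous_perturbedProduct hρ hp hq).measurable
          (perturbedProduct_nonneg hpρ hqρ), ← hsplit]
        rfl
    _ = (∫ t, ρ t * u t) * (∫ t, ρ t * v t) + (∫ t, p t * u t) * ∫ t, q t * v t := by
        rw [integral_add' (integrable_tensor (integrable_mul hρ hρ' hu) (integrable_mul hρ hρ' hv))
          (integrable_tensor (integrable_mul hp hp' hu) (integrable_mul hq hq' hv)),
          integral_tensor, integral_tensor]
        rfl

lemma ofReal_abs_integral_mul_integral_div_le_AW1l1 (hρ : Continuous ρ) (hp : Continuous p)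
    (hq : Continuous q) (hρ' : HasCompactSupport ρ) (hp' : HasCompactSupport p)
    (hq' : HasCompactSupport q) (hpρ : ∀ t, |p t| ≤ ρ t) (hqρ : ∀ t, |q t| ≤ ρ t)
    (hρ₁ : ∫ t, ρ t = 1) (hq₁ : ∫ t, q t = 0) {u v : ℝ → ℝ} (hu : Continuous u)
    (hu₁ : ∀ t, |u t| ≤ 1) {K : NNReal} (hv : LipschitzWith K v) :
    ENNReal.ofReal |(∫ t, p t * u t) * ∫ t, q t * v t| / K ≤
      AW1l1 (densityLaw (perturbedProduct ρ p q)) (densityLaw (tensor ρ ρ)) := by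
  have hρ₀ (t : ℝ) : 0 ≤ ρ t := (abs_nonneg _).trans (hpρ t)
  have hv' : LipschitzWith K fun x : Traj 1 2 => v (x 1 0) := .of_dist_le_mul fun x y =>
    (hv.dist_le_mul _ _).trans (mul_le_mul_of_nonneg_left
      ((dist_le_pi_dist (x 1) (y 1) 0).trans (dist_le_pi_dist x y 1)) K.coe_nonneg)
  have : IsProbabilityMeasure (densityLaw ρ) :=
    isProbabilityMeasure_densityLaw (hρ.integrable_of_hasCompactSupport hρ') hρ₀ hρ₁
  have hcov := ofReal_abs_covariance_div_le_AW1l1 le_rfl le_rfl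
    (u := fun y : Traj 1 1 => u (y 0 0)) (by fun_prop) (fun y => hu₁ _) hv'
    (integrable_densityLaw_of_continuous (continuous_perturbedProduct hρ hp hq)
      (hasCompactSupport_perturbedProduct hρ' hp' hq') (perturbedProduct_nonneg hpρ hqρ)
      hv'.continuous)
    (integrable_densityLaw_of_continuous (continuous_tensor hρ hρ)
      (hasCompactSupport_tensor hρ' hρ') (tensor_nonneg hρ₀ hρ₀) hv'.continuous)
    (indepFun_restr_densityLaw_tensor hρ.measurable hρ.measurable hρ₀ hv.continuous.measurable)
  have hjoint {w : ℝ → ℝ} (hw : Continuous w) :=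
    integral_tensor_densityLaw_perturbedProduct hρ hp hq hρ' hp' hq' hpρ hqρ hu hw
  have hpast : ∫ x : Traj 1 2, u (x 0 0) ∂densityLaw (perturbedProduct ρ p q) =
      ∫ t, ρ t * u t := by
    simpa [tensor, hρ₁, hq₁] using hjoint (continuous_const (y := (1 : ℝ)))
  have hbase : ∫ x : Traj 1 2, v (x 1 0) ∂densityLaw (tensor ρ ρ) = ∫ t, ρ t * v t := by
    rw [integral_densityLaw (continuous_tensor hρ hρ).measurable (tensor_nonneg hρ₀ hρ₀)]
    simpa [tensor, mul_assoc, hρ₁] using integral_tensor ρ fun t => ρ t * v t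
  have hcovariance : (∫ x : Traj 1 2, u (x 0 0) * v (x 1 0) ∂densityLaw (perturbedProduct ρ p q)) -
      (∫ x : Traj 1 2, u (x 0 0) ∂densityLaw (perturbedProduct ρ p q)) *
        ∫ x : Traj 1 2, v (x 1 0) ∂densityLaw (tensor ρ ρ) =
      (∫ t, p t * u t) * ∫ t, q t * v t := by
    rw [hpast, hbase]
    exact sub_eq_iff_eq_add'.2 (hjoint hv.continuous)
  rwa [← hcovariance]

end PerturbedProduct

/-! ### Scaled profiles -/

/-- The profile `w` centred at `1/2`, with amplitude `a` and width `ε`. -/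
def scaled (a ε : ℝ) (w : ℝ → ℝ) (t : ℝ) : ℝ := a * w ((t - 1 / 2) / ε)

section Scaled

variable {w : ℝ → ℝ} {a ε : ℝ}

lemma contDiff_scaled {n : WithTop ℕ∞} (hw : ContDiff ℝ n w) (a ε : ℝ) :
    ContDiff ℝ n (scaled a ε w) :=
  contDiff_const.mul (hw.comp ((contDiff_id.sub contDiff_const).div_const ε))

lemma integral_scaled (a : ℝ) (hε : 0 < ε) (w : ℝ → ℝ) :
    ∫ t, scaled a ε w t = a * ε * ∫ t, w t := by
  unfold scaled
  rw [integral_const_mul, integral_sub_right_eq_self (fun t => w (t / ε)),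
    Measure.integral_comp_div, abs_of_pos hε, smul_eq_mul, mul_assoc]

lemma integral_abs_scaled (a : ℝ) (hε : 0 < ε) (w : ℝ → ℝ) :
    ∫ t, |scaled a ε w t| = |a| * ε * ∫ t, |w t| := by
  simp only [← integral_scaled |a| hε, scaled, abs_mul]

lemma iteratedDeriv_scaled (a ε : ℝ) (hw : ContDiff ℝ (⊤ : ℕ∞) w) (i : ℕ) :
    iteratedDeriv i (scaled a ε w) = scaled (a * ε⁻¹ ^ i) ε (iteratedDeriv i w) := by
  have hwi : ContDiff ℝ i w := hw.of_le (mod_cast le_top)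
  have hcomp : scaled a ε w = fun t => a * (fun t => w (ε⁻¹ * t)) (t - 1 / 2) := by
    ext t; simp only [scaled, div_eq_inv_mul]
  ext t
  rw [hcomp, iteratedDeriv_const_mul_field,
    iteratedDeriv_comp_sub_const i (fun t => w (ε⁻¹ * t)) (1 / 2)]
  simp only [iteratedDeriv_comp_const_mul hwi ε⁻¹, scaled, div_eq_inv_mul]
  ring

/-- Each derivative costs a factor `ε⁻¹`, and the support has length of order `ε`. -/
lemma sobNormP_tensor_scaled_le {k : ℕ} {v : ℝ → ℝ} (hw : ContDiff ℝ (⊤ : ℕ∞) w)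
    (hv : ContDiff ℝ (⊤ : ℕ∞) v) (hε : 0 < ε) (hε₁ : ε ≤ 1) (ha : |a| * ε ≤ ε ^ k) :
    sobNormP 1 2 k (tensor (scaled a ε w) v) ≤ sobNormP 1 2 k (tensor (scaled 1 1 w) v) := by
  refine Finset.sum_le_sum fun α hα => ?_
  rw [mderivP_tensor α (contDiff_scaled hw a ε) hv, mderivP_tensor α (contDiff_scaled hw 1 1) hv,
    integral_abs_tensor, integral_abs_tensor, iteratedDeriv_scaled a ε hw,
    iteratedDeriv_scaled 1 1 hw, integral_abs_scaled _ hε, integral_abs_scaled _ one_pos]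
  gcongr ?_ * _ * _
  calc |a * ε⁻¹ ^ α (0, 0)| * ε = |a| * ε / ε ^ α (0, 0) := by
        rw [abs_mul, abs_of_pos (pow_pos (inv_pos.2 hε) _), inv_pow]; ring
    _ ≤ 1 := by
        rw [div_le_one (by positivity)]
        exact ha.trans (pow_le_pow_of_le_one hε.le hε₁ (apply_le_of_mem_mIdxP hα _))
    _ = |1 * 1⁻¹ ^ α (0, 0)| * 1 := by simp

end Scaled

/-! ### The oscillating densities -/

/-- A smooth probability density on `[0,1]` which is at least `1` within `1/4` of the centre. -/
def plateau : ℝ → ℝ :=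
  (⟨1 / 4, 1 / 2, by norm_num, by norm_num⟩ : ContDiffBump (1 / 2 : ℝ)).normed volume

lemma contDiff_plateau : ContDiff ℝ (⊤ : ℕ∞) plateau := ContDiffBump.contDiff_normed _

lemma plateau_nonneg (t : ℝ) : 0 ≤ plateau t := ContDiffBump.nonneg_normed _ _

lemma hasCompactSupport_plateau : HasCompactSupport plateau :=
  ContDiffBump.hasCompactSupport_normed _

lemma integral_plateau : ∫ t, plateau t = 1 := ContDiffBump.integral_normed _

lemma integrable_plateau : Integrable plateau := ContDiffBump.integrable_normed _

lemma support_plateau_subset : Function.support plateau ⊆ Set.Icc 0 1 := by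
  rw [plateau, ContDiffBump.support_normed_eq, Real.ball_eq_Ioo]
  exact Set.Ioo_subset_Icc_self.trans (Set.Icc_subset_Icc (by norm_num) (by norm_num))

lemma one_le_plateau {t : ℝ} (ht : |t - 1 / 2| ≤ 1 / 4) : 1 ≤ plateau t := by
  rw [plateau, ContDiffBump.normed_def]
  set f : ContDiffBump (1 / 2 : ℝ) := ⟨1 / 4, 1 / 2, by norm_num, by norm_num⟩
  rw [f.one_of_mem_closedBall (by simpa [f, Real.dist_eq] using ht), one_le_div f.integral_pos]
  refine (f.integral_le_measure_closedBall volume).trans ?_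
  rw [Real.closedBall_eq_Icc, Real.volume_real_Icc_of_le] <;> norm_num [f]

/-- A bump function at `0`, cutting off the identity in `osc`. -/
def cutoff : ContDiffBump (0 : ℝ) := ⟨1 / 8, 1 / 4, by norm_num, by norm_num⟩

/-- A smooth odd oscillation with values in `[-1, 1]`, supported in `[-1/4, 1/4]`. -/
def osc (t : ℝ) : ℝ := t * cutoff t

lemma contDiff_osc : ContDiff ℝ (⊤ : ℕ∞) osc := contDiff_id.mul cutoff.contDiff

lemma osc_neg (t : ℝ) : osc (-t) = -osc t := by
  rw [osc, osc, cutoff.neg, neg_mul]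

lemma abs_lt_of_osc_ne_zero {t : ℝ} (ht : osc t ≠ 0) : |t| < 1 / 4 := by
  have hball : t ∈ Metric.ball 0 cutoff.rOut :=
    cutoff.support_eq ▸ Function.mem_support.2 (right_ne_zero_of_mul ht)
  rwa [mem_ball_zero_iff] at hball

lemma hasCompactSupport_osc : HasCompactSupport osc := cutoff.hasCompactSupport.mul_left

lemma abs_osc_le_one (t : ℝ) : |osc t| ≤ 1 := by
  by_cases ht : osc t = 0
  · simp [ht]
  · rw [osc, abs_mul, abs_of_nonneg cutoff.nonneg]
    exact mul_le_one₀ (by linarith [abs_lt_of_osc_ne_zero ht]) cutoff.nonneg cutoff.le_one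

lemma osc_one_eighth_ne_zero : osc (1 / 8) ≠ 0 :=
  mul_ne_zero (by norm_num) (cutoff.pos_of_mem_ball (by norm_num [cutoff])).ne'

lemma integral_osc_sq_pos : 0 < ∫ t, osc t * osc t :=
  (contDiff_osc.continuous.mul contDiff_osc.continuous
    ).integral_pos_of_hasCompactSupport_nonneg_nonzero hasCompactSupport_osc.mul_right
    (fun _ => mul_self_nonneg _) (mul_self_ne_zero.2 osc_one_eighth_ne_zero)

section ScaledOsc

variable {a ε : ℝ}

lemma scaled_osc_one_sub (a ε t : ℝ) : scaled a ε osc (1 - t) = -scaled a ε osc t := by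
  rw [scaled, scaled, ← mul_neg, ← osc_neg]
  ring_nf

lemma abs_lt_of_scaled_osc_ne_zero (hε : 0 < ε) {t : ℝ} (ht : scaled a ε osc t ≠ 0) :
    |t - 1 / 2| < ε / 4 := by
  have hlt := abs_lt_of_osc_ne_zero (right_ne_zero_of_mul ht)
  rw [abs_div, abs_of_pos hε, div_lt_iff₀ hε] at hlt
  linarith

lemma abs_scaled_osc_le_plateau (ha : |a| ≤ 1) (hε : ε ∈ Set.Ioc 0 1) (t : ℝ) :
    |scaled a ε osc t| ≤ plateau t := by
  by_cases ht : scaled a ε osc t = 0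
  · rw [ht, abs_zero]; exact plateau_nonneg t
  · calc |scaled a ε osc t| ≤ 1 := by
          rw [scaled, abs_mul]; exact mul_le_one₀ ha (abs_nonneg _) (abs_osc_le_one _)
      _ ≤ plateau t := one_le_plateau (by linarith [abs_lt_of_scaled_osc_ne_zero hε.1 ht, hε.2])

lemma support_scaled_osc_subset (ha : |a| ≤ 1) (hε : ε ∈ Set.Ioc 0 1) :
    Function.support (scaled a ε osc) ⊆ Function.support plateau := fun t ht =>
  ((abs_pos.2 ht).trans_le (abs_scaled_osc_le_plateau ha hε t)).ne'

lemma hasCompactSupport_scaled_osc (ha : |a| ≤ 1) (hε : ε ∈ Set.Ioc 0 1) :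
    HasCompactSupport (scaled a ε osc) :=
  hasCompactSupport_plateau.mono (support_scaled_osc_subset ha hε)

lemma integral_scaled_osc (a : ℝ) (hε : 0 < ε) : ∫ t, scaled a ε osc t = 0 := by
  have hodd : ∫ t, osc t = -∫ t, osc t := by
    rw [← integral_neg, ← integral_neg_eq_self]
    simp only [osc_neg]
  rw [integral_scaled a hε, self_eq_neg.1 hodd, mul_zero]

lemma integral_scaled_osc_mul (a : ℝ) (hε : 0 < ε) :
    ∫ t, scaled a ε osc t * scaled 1 ε osc t = a * ε * ∫ t, osc t * osc t := by
  rw [← integral_scaled a hε]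
  simp only [scaled, one_mul, mul_assoc]

lemma integral_abs_osc_le_one : ∫ t, |osc t| ≤ 1 := by
  calc ∫ t, |osc t| = ∫ t, |scaled 1 1 osc t| := by simp [integral_abs_scaled 1 one_pos osc]
    _ ≤ ∫ t, plateau t := integral_mono_of_nonneg (ae_of_all _ fun _ => abs_nonneg _)
        integrable_plateau (ae_of_all _ (abs_scaled_osc_le_plateau (by simp) (by simp)))
    _ = 1 := integral_plateau

end ScaledOsc

/-- The smooth density on the unit square obtained from `plateau ⊗ plateau` by correlating the
coordinates through an oscillation of height `a` and width `ε` in `x₁`. -/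
def oscillatingDensity (a ε : ℝ) : Traj 1 2 → ℝ :=
  perturbedProduct plateau (scaled a ε osc) (scaled 1 1 osc)

section OscillatingDensity

variable {a ε : ℝ}

lemma abs_scaled_one_osc_le_plateau (t : ℝ) : |scaled 1 1 osc t| ≤ plateau t :=
  abs_scaled_osc_le_plateau (by simp) (by simp) t

lemma oscillatingDensity_zero (ε : ℝ) : oscillatingDensity 0 ε = tensor plateau plateau := by
  ext x
  simp [oscillatingDensity, perturbedProduct, tensor, scaled]

lemma oscillatingDensity_nonneg (ha : |a| ≤ 1) (hε : ε ∈ Set.Ioc 0 1) (x : Traj 1 2) :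
    0 ≤ oscillatingDensity a ε x :=
  perturbedProduct_nonneg (abs_scaled_osc_le_plateau ha hε) abs_scaled_one_osc_le_plateau x

lemma contDiff_oscillatingDensity (n : ℕ∞) (a ε : ℝ) : ContDiff ℝ n (oscillatingDensity a ε) :=
  (contDiff_perturbedProduct contDiff_plateau (contDiff_scaled contDiff_osc a ε)
    (contDiff_scaled contDiff_osc 1 1)).of_le (mod_cast le_top)

lemma hasCompactSupport_scaled_one_osc : HasCompactSupport (scaled 1 1 osc) :=
  hasCompactSupport_scaled_osc (by simp) (by simp)

lemma hasCompactSupport_oscillatingDensity (ha : |a| ≤ 1) (hε : ε ∈ Set.Ioc 0 1) :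
    HasCompactSupport (oscillatingDensity a ε) :=
  hasCompactSupport_perturbedProduct hasCompactSupport_plateau
    (hasCompactSupport_scaled_osc ha hε) hasCompactSupport_scaled_one_osc

lemma integrable_mderivP_oscillatingDensity (ha : |a| ≤ 1) (hε : ε ∈ Set.Ioc 0 1)
    (α : Fin 2 × Fin 1 → ℕ) : Integrable (mderivP α (oscillatingDensity a ε)) :=
  integrable_mderivP (contDiff_oscillatingDensity ⊤ a ε)
    (hasCompactSupport_oscillatingDensity ha hε) α

lemma isProbabilityMeasure_densityLaw_oscillatingDensity (ha : |a| ≤ 1) (hε : ε ∈ Set.Ioc 0 1) :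
    IsProbabilityMeasure (densityLaw (oscillatingDensity a ε)) :=
  isProbabilityMeasure_densityLaw_perturbedProduct integrable_plateau
    ((contDiff_scaled contDiff_osc a ε).continuous.integrable_of_hasCompactSupport
      (hasCompactSupport_scaled_osc ha hε))
    ((contDiff_scaled contDiff_osc 1 1).continuous.integrable_of_hasCompactSupport
      hasCompactSupport_scaled_one_osc)
    (abs_scaled_osc_le_plateau ha hε) abs_scaled_one_osc_le_plateau integral_plateau
    (integral_scaled_osc 1 one_pos)

lemma densityLaw_oscillatingDensity_compl_unitSquare (ha : |a| ≤ 1) (hε : ε ∈ Set.Ioc 0 1) :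
    densityLaw (oscillatingDensity a ε) unitSquareᶜ = 0 := by
  refine densityLaw_compl_eq_zero measurableSet_unitSquare fun x hx => ?_
  have hbase := support_tensor_subset_unitSquare support_plateau_subset support_plateau_subset
  have hpert := support_tensor_subset_unitSquare
    ((support_scaled_osc_subset ha hε).trans support_plateau_subset)
    ((support_scaled_osc_subset (a := 1) (ε := 1) (by simp) (by simp)).trans support_plateau_subset)
  rw [oscillatingDensity, perturbedProduct, Pi.add_apply,
    Function.notMem_support.1 (mt (@hbase x) hx), Function.notMem_support.1 (mt (@hpert x) hx),
    add_zero]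

lemma sobNormP_oscillatingDensity_le {k : ℕ} (ha : |a| ≤ 1) (hε : ε ∈ Set.Ioc 0 1)
    (haε : |a| * ε ≤ ε ^ k) : sobNormP 1 2 k (oscillatingDensity a ε) ≤
      sobNormP 1 2 k (tensor plateau plateau) +
        sobNormP 1 2 k (tensor (scaled 1 1 osc) (scaled 1 1 osc)) :=
  (sobNormP_add_le k (contDiff_tensor contDiff_plateau contDiff_plateau)
    (hasCompactSupport_tensor hasCompactSupport_plateau hasCompactSupport_plateau)
    (contDiff_tensor (contDiff_scaled contDiff_osc a ε) (contDiff_scaled contDiff_osc 1 1))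
    (hasCompactSupport_tensor (hasCompactSupport_scaled_osc ha hε)
      hasCompactSupport_scaled_one_osc)).trans
  (add_le_add_right (sobNormP_tensor_scaled_le contDiff_osc (contDiff_scaled contDiff_osc 1 1)
    hε.1 hε.2 haε) _)

lemma W1l1_oscillatingDensity_le (ha : |a| ≤ 1) (hε : ε ∈ Set.Ioc 0 1) :
    W1l1 (densityLaw (oscillatingDensity a ε)) (densityLaw (oscillatingDensity 0 ε)) ≤
      ENNReal.ofReal (|a| * ε * ε) := by
  have : IsProbabilityMeasure
      (densityLaw (perturbedProduct plateau (scaled a ε osc) (scaled 1 1 osc))) :=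
    isProbabilityMeasure_densityLaw_oscillatingDensity ha hε
  have hsupp (t : ℝ) (ht : scaled a ε osc t ≠ 0) : |2 * t - 1| ≤ ε := by
    have hlt := abs_lt.1 (abs_lt_of_scaled_osc_ne_zero hε.1 ht)
    exact abs_le.2 ⟨by linarith, by linarith⟩
  have hcont (a ε : ℝ) : Continuous (scaled a ε osc) :=
    (contDiff_scaled contDiff_osc a ε).continuous
  have hle := W1l1_densityLaw_perturbedProduct_le contDiff_plateau.continuous.measurable
    (hcont a ε).measurable (hcont 1 1).measurable
    ((hcont a ε).integrable_of_hasCompactSupport (hasCompactSupport_scaled_osc ha hε))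
    ((hcont 1 1).integrable_of_hasCompactSupport hasCompactSupport_scaled_one_osc)
    (abs_scaled_osc_le_plateau ha hε) abs_scaled_one_osc_le_plateau
    (scaled_osc_one_sub a ε) hsupp
  rw [oscillatingDensity_zero]
  refine hle.trans ?_
  rw [← ENNReal.ofReal_mul hε.1.le, integral_abs_scaled a hε.1, integral_abs_scaled 1 one_pos]
  refine ENNReal.ofReal_le_ofReal ?_
  have h₀ : 0 ≤ ∫ t, |osc t| := integral_nonneg fun _ => abs_nonneg _
  have h₁ : (∫ t, |osc t|) * ∫ t, |osc t| ≤ 1 :=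
    mul_le_one₀ integral_abs_osc_le_one h₀ integral_abs_osc_le_one
  calc ε * (|a| * ε * (∫ t, |osc t|) * (|1| * 1 * ∫ t, |osc t|))
      = |a| * ε * ε * ((∫ t, |osc t|) * ∫ t, |osc t|) := by rw [abs_one]; ring
    _ ≤ |a| * ε * ε :=
        mul_le_of_le_one_right (mul_nonneg (mul_nonneg (abs_nonneg a) hε.1.le) hε.1.le) h₁

lemma oscillatingDensity_ne_oscillatingDensity_zero (ha : a ≠ 0) (hε : 0 < ε) :
    oscillatingDensity a ε ≠ oscillatingDensity 0 ε := by
  intro heq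
  have hx := congrFun heq ![fun _ => 1 / 2 + ε / 8, fun _ => 5 / 8]
  have hosc : scaled a ε osc (1 / 2 + ε / 8) * scaled 1 1 osc (5 / 8) = 0 := by
    rw [oscillatingDensity_zero] at hx
    exact add_eq_left.1 hx
  have harg : (1 / 2 + ε / 8 - 1 / 2) / ε = 1 / 8 := by field_simp; ring
  have harg' : ((5 : ℝ) / 8 - 1 / 2) / 1 = 1 / 8 := by norm_num
  rw [scaled, scaled, harg, harg'] at hosc
  exact mul_ne_zero (mul_ne_zero ha osc_one_eighth_ne_zero)
    (mul_ne_zero one_ne_zero osc_one_eighth_ne_zero) hosc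

lemma W1l1_oscillatingDensity_pos (ha₀ : a ≠ 0) (ha : |a| ≤ 1) (hε : ε ∈ Set.Ioc 0 1) :
    0 < W1l1 (densityLaw (oscillatingDensity a ε)) (densityLaw (oscillatingDensity 0 ε)) :=
  W1l1_densityLaw_pos (contDiff_oscillatingDensity 1 a ε) (contDiff_oscillatingDensity 1 0 ε)
    (hasCompactSupport_oscillatingDensity ha hε)
    (hasCompactSupport_oscillatingDensity (by simp) hε)
    (oscillatingDensity_nonneg ha hε) (oscillatingDensity_nonneg (by simp) hε)
    (oscillatingDensity_ne_oscillatingDensity_zero ha₀ hε.1)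

lemma exists_ofReal_mul_le_AW1l1_oscillatingDensity :
    ∃ c : ℝ, 0 < c ∧ ∀ a ε : ℝ, |a| ≤ 1 → ε ∈ Set.Ioc 0 1 → ENNReal.ofReal (c * (|a| * ε)) ≤
      AW1l1 (densityLaw (oscillatingDensity a ε)) (densityLaw (oscillatingDensity 0 ε)) := by
  have hsmooth (a ε : ℝ) := contDiff_scaled contDiff_osc a ε
  obtain ⟨K, hK⟩ := (hsmooth 1 1).lipschitzWith_of_hasCompactSupport
    hasCompactSupport_scaled_one_osc (by simp)
  have hI := integral_osc_sq_pos
  set I := ∫ t, osc t * osc t with hI_def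
  refine ⟨I ^ 2 / (K + 1), by positivity, fun a ε ha hε => ?_⟩
  have hle := ofReal_abs_integral_mul_integral_div_le_AW1l1 contDiff_plateau.continuous
    (hsmooth a ε).continuous (hsmooth 1 1).continuous hasCompactSupport_plateau
    (hasCompactSupport_scaled_osc ha hε) hasCompactSupport_scaled_one_osc
    (abs_scaled_osc_le_plateau ha hε) abs_scaled_one_osc_le_plateau integral_plateau
    (integral_scaled_osc 1 one_pos) (hsmooth 1 ε).continuous
    (fun t => by rw [scaled, one_mul]; exact abs_osc_le_one _)
    (hK.weaken (self_le_add_right K 1))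
  rw [integral_scaled_osc_mul a hε.1, integral_scaled_osc_mul 1 one_pos, ← hI_def] at hle
  rw [oscillatingDensity_zero]
  refine le_trans (le_of_eq ?_) hle
  rw [← ENNReal.ofReal_coe_nnreal, ← ENNReal.ofReal_div_of_pos (by positivity)]
  congr 1
  rw [one_mul, one_mul, mul_assoc (a * ε), abs_mul, abs_mul, abs_of_pos hε.1, abs_mul_self]
  push_cast
  ring

end OscillatingDensity

/-! ### Sharpness of the exponent -/

lemma ofReal_mul_rpow_le_of_le_pow {W A : ℝ≥0∞} {c ε : ℝ} {k : ℕ} (hc : 0 ≤ c) (hε : 0 ≤ ε)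
    (hW : W ≤ ENNReal.ofReal (ε ^ (k + 1))) (hA : ENNReal.ofReal (c * ε ^ k) ≤ A) :
    ENNReal.ofReal c * W ^ ((k : ℝ) / (k + 1)) ≤ A := by
  have hexp : (0 : ℝ) ≤ (k : ℝ) / (k + 1) := by positivity
  have hpow : (ε ^ (k + 1)) ^ ((k : ℝ) / (k + 1)) = ε ^ k := by
    rw [← Real.rpow_natCast, ← Real.rpow_mul hε, ← Real.rpow_natCast ε k]
    congr 1
    push_cast
    field_simp
  calc ENNReal.ofReal c * W ^ ((k : ℝ) / (k + 1))
      ≤ ENNReal.ofReal c * ENNReal.ofReal (ε ^ (k + 1)) ^ ((k : ℝ) / (k + 1)) := by gcongr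
    _ = ENNReal.ofReal (c * ε ^ k) := by
        rw [ENNReal.ofReal_rpow_of_nonneg (by positivity) hexp, hpow, ENNReal.ofReal_mul hc]
    _ ≤ A := hA

lemma tendsto_ofReal_one_div_add_one_pow (k : ℕ) :
    Filter.Tendsto (fun n : ℕ => ENNReal.ofReal ((1 / ((n : ℝ) + 1)) ^ (k + 1))) Filter.atTop
      (nhds 0) := by
  simpa using ENNReal.tendsto_ofReal
    ((tendsto_one_div_add_atTop_nhds_zero_nat (𝕜 := ℝ)).pow (k + 1))

/-- The exponent `k/(k+1)` is sharp for `AW₁` versus `W₁`: there exist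
probability measures on `[0,1]²` with `k`-smooth densities of uniformly bounded Sobolev
norm, with `W₁ → 0` and `AW₁ ≥ c W₁^{k/(k+1)}`. -/
theorem aw1_w1_exponent_sharp (k : ℕ) (hk : 1 ≤ k) :
    ∃ c : ℝ, 0 < c ∧
    ∃ (μ ν : ℕ → Measure (Traj 1 2)) (f g : ℕ → Traj 1 2 → ℝ),
      (∀ n, IsProbabilityMeasure (μ n)) ∧ (∀ n, IsProbabilityMeasure (ν n)) ∧
      (∀ n, μ n ({x : Traj 1 2 | ∀ i j, x i j ∈ Set.Icc (0 : ℝ) 1})ᶜ = 0) ∧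
      (∀ n, ν n ({x : Traj 1 2 | ∀ i j, x i j ∈ Set.Icc (0 : ℝ) 1})ᶜ = 0) ∧
      (∀ n x, 0 ≤ f n x) ∧ (∀ n x, 0 ≤ g n x) ∧
      (∀ n, μ n = volume.withDensity fun x => ENNReal.ofReal (f n x)) ∧
      (∀ n, ν n = volume.withDensity fun x => ENNReal.ofReal (g n x)) ∧
      (∀ n, ContDiff ℝ (k : ℕ∞) (f n)) ∧ (∀ n, ContDiff ℝ (k : ℕ∞) (g n)) ∧
      (∀ n, ∀ α ∈ mIdxP 1 2 k, Integrable (mderivP α (f n)) ∧ Integrable (mderivP α (g n))) ∧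
      (∃ B : ℝ, ∀ n, sobNormP 1 2 k (f n) + sobNormP 1 2 k (g n) ≤ B) ∧
      (∀ n, 0 < W1l1 (μ n) (ν n)) ∧
      Filter.Tendsto (fun n => W1l1 (μ n) (ν n)) Filter.atTop (nhds 0) ∧
      (∀ n, ENNReal.ofReal c * W1l1 (μ n) (ν n) ^ ((k : ℝ) / (k + 1)) ≤ AW1l1 (μ n) (ν n)) := by
  obtain ⟨c, hc, hAW⟩ := exists_ofReal_mul_le_AW1l1_oscillatingDensity
  let ε (n : ℕ) : ℝ := 1 / (n + 1)
  let a (n : ℕ) : ℝ := ε n ^ (k - 1)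
  have hε (n : ℕ) : ε n ∈ Set.Ioc 0 1 :=
    ⟨Nat.one_div_pos_of_nat, div_le_one_of_le₀ (by simp) (by positivity)⟩
  have ha₀ (n : ℕ) : 0 < a n := pow_pos (hε n).1 _
  have ha (n : ℕ) : |a n| ≤ 1 := (abs_of_pos (ha₀ n)).trans_le (pow_le_one₀ (hε n).1.le (hε n).2)
  have h₀ : |(0 : ℝ)| ≤ 1 := by simp
  have haε (n : ℕ) : |a n| * ε n = ε n ^ k := by
    rw [abs_of_pos (ha₀ n), pow_sub_one_mul (by omega)]
  have hW (n : ℕ) := W1l1_oscillatingDensity_le (ha n) (hε n)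
  simp only [haε, ← pow_succ] at hW
  exact ⟨c, hc, _, _, fun n => oscillatingDensity (a n) (ε n), fun n => oscillatingDensity 0 (ε n),
    fun n => isProbabilityMeasure_densityLaw_oscillatingDensity (ha n) (hε n),
    fun n => isProbabilityMeasure_densityLaw_oscillatingDensity h₀ (hε n),
    fun n => densityLaw_oscillatingDensity_compl_unitSquare (ha n) (hε n),
    fun n => densityLaw_oscillatingDensity_compl_unitSquare h₀ (hε n),
    fun n => oscillatingDensity_nonneg (ha n) (hε n), fun n => oscillatingDensity_nonneg h₀ (hε n),
    fun _ => rfl, fun _ => rfl, fun n => contDiff_oscillatingDensity k _ _,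
    fun n => contDiff_oscillatingDensity k _ _,
    fun n α _ => ⟨integrable_mderivP_oscillatingDensity (ha n) (hε n) α,
      integrable_mderivP_oscillatingDensity h₀ (hε n) α⟩,
    ⟨_, fun n => add_le_add (sobNormP_oscillatingDensity_le (ha n) (hε n) (haε n).le)
      (sobNormP_oscillatingDensity_le h₀ (hε n) (by simpa using (pow_pos (hε n).1 k).le))⟩,
    fun n => W1l1_oscillatingDensity_pos (ha₀ n).ne' (ha n) (hε n),
    tendsto_of_tendsto_of_tendsto_of_le_of_le tendsto_const_nhds
      (tendsto_ofReal_one_div_add_one_pow k) (fun _ => zero_le) hW,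
    fun n => ofReal_mul_rpow_le_of_le_pow hc.le (hε n).1.le (hW n)
      (haε n ▸ hAW (a n) (ε n) (ha n) (hε n))⟩

end
end
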